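/- arXiv:math/0308086 — 5 statements merged into one kernel-verified Lean document; each statement's English description precedes it below -/
import Mathlib

section
/- The derivative of the Riemann zeta function at -1 satisfies ζ'(-1) = 2 ∫₀^∞ x·log x / (e^{2πx} − 1) dx. -/
open Real MeasureTheory Filter

/-- Hurwitz zeta function ζ(s, a) for real a > 0, via analytic continuation. -/
noncomputable def hurwitzZetaReal (s : ℂ) (a : ℝ) : ℂ :=
  HurwitzZeta.hurwitzZeta (a : UnitAddCircle) s -
    ∑ k ∈ Finset.range (⌈a⌉₊ - 1), ((a - (⌈a⌉₊ - 1) + k : ℝ) : ℂ) ^ (-s)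

/-- ζ'(-1, a): derivative of the Hurwitz zeta function w.r.t. s at s = -1. -/
noncomputable def hurwitzZetaDerivNegOne (a : ℝ) : ℂ :=
  deriv (fun s => hurwitzZetaReal s a) (-1)

/-- Logarithm of the Glaisher–Kinkelin constant: log A = 1/12 - ζ'(-1). -/
noncomputable def logA : ℂ := 1 / 12 - deriv riemannZeta (-1)

/-- log G(z+1) for z > 0, via log G(z+1) = z log Γ(z) + ζ'(-1) - ζ'(-1, z). -/
noncomputable def logBarnesG1p (z : ℝ) : ℂ :=
  z * Real.log (Real.Gamma z) + deriv riemannZeta (-1) - hurwitzZetaDerivNegOne z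

/-- log G(x) for x > 0, via the recurrence G(z+1) = Γ(z) G(z) on (0, 1]. -/
noncomputable def logBarnesG (x : ℝ) : ℂ :=
  if x ≤ 1 then logBarnesG1p x - Real.log (Real.Gamma x) else logBarnesG1p (x - 1)

/-- The Barnes G-function (for positive real argument). -/
noncomputable def barnesG (x : ℝ) : ℂ := Complex.exp (logBarnesG x)

/-- The digamma function ψ = (log Γ)'. -/
noncomputable def digamma (x : ℝ) : ℝ := deriv (fun t => Real.log (Real.Gamma t)) x

/-- The trigamma function ψ⁽¹⁾ = (log Γ)''. -/
noncomputable def trigamma (x : ℝ) : ℝ :=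
  deriv (deriv (fun t => Real.log (Real.Gamma t))) x

/-- The Clausen function Cl₂(x) = ∑_{k ≥ 1} sin(k x) / k². -/
noncomputable def clausen2 (x : ℝ) : ℝ := ∑' k : ℕ, Real.sin ((k + 1) * x) / (k + 1) ^ 2

/-- Catalan's constant. -/
noncomputable def catalanConst : ℝ := ∑' k : ℕ, (-1 : ℝ) ^ k / (2 * (k : ℝ) + 1) ^ 2

/-!
The zeta series gives `∫₀^∞ x^{s-1} / (e^{2πx} - 1) dx = (2π)^{-s} Γ(s) ζ(s)` for `Re s > 1`, so
the functional equation reads `ζ(1 - s) = 2 cos(πs/2) ∫₀^∞ x^{s-1} / (e^{2πx} - 1) dx`.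
Differentiate under the integral sign: at an even integer `s` the derivative of the cosine
vanishes, and only the integral carrying `log x` survives.
-/

section BoseKernel

open Asymptotics Set Topology

/-- The Bose–Einstein kernel `1 / (e^{rx} - 1)` with rate `r`, whose Mellin transform represents
the zeta function. It takes the junk value `0` where `r * x = 0`. -/
noncomputable def boseKernel (r x : ℝ) : ℝ := (Real.exp (r * x) - 1)⁻¹

variable {r x : ℝ}

lemma boseKernel_nonneg (h : 0 ≤ r * x) : 0 ≤ boseKernel r x :=
  inv_nonneg.mpr (sub_nonneg.mpr (Real.one_le_exp h))

lemma hasSum_exp_neg_boseKernel (h : 0 < r * x) :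
    HasSum (fun n : ℕ => Real.exp (-(r * x * (n + 1)))) (boseKernel r x) := by
  have hq : Real.exp (-(r * x)) < 1 := Real.exp_lt_one_iff.mpr (neg_lt_zero.mpr h)
  have geometric := (hasSum_geometric_of_lt_one (Real.exp_pos _).le hq).mul_left
    (Real.exp (-(r * x)))
  have value : Real.exp (-(r * x)) * (1 - Real.exp (-(r * x)))⁻¹ = boseKernel r x := by
    rw [boseKernel, ← inv_inv (Real.exp (-(r * x))), ← mul_inv, Real.exp_neg, inv_inv, mul_sub,
      mul_one, mul_inv_cancel₀ (Real.exp_ne_zero _)]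
  have term (n : ℕ) : Real.exp (-(r * x * (n + 1))) =
      Real.exp (-(r * x)) * Real.exp (-(r * x)) ^ n := by
    rw [← Real.exp_nat_mul, ← Real.exp_add]
    ring_nf
  simpa only [value, term] using geometric

lemma continuousOn_boseKernel (hr : 0 < r) : ContinuousOn (boseKernel r) (Ioi 0) := by
  refine ContinuousOn.inv₀ (by fun_prop) fun x hx => ?_
  exact (sub_pos.mpr (Real.one_lt_exp_iff.mpr (mul_pos hr hx))).ne'

lemma isBigO_boseKernel_nhdsGT_zero (hr : 0 < r) : boseKernel r =O[𝓝[>] 0] fun x => x⁻¹ := by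
  refine IsBigO.of_bound r⁻¹ ?_
  filter_upwards [self_mem_nhdsWithin] with x (hx : 0 < x)
  have hrx : 0 < r * x := mul_pos hr hx
  rw [Real.norm_of_nonneg (boseKernel_nonneg hrx.le), Real.norm_of_nonneg (inv_pos.mpr hx).le,
    ← mul_inv]
  exact inv_anti₀ hrx (by linarith [Real.add_one_le_exp (r * x)])

lemma isBigO_boseKernel_atTop (hr : 0 < r) :
    boseKernel r =O[atTop] fun x => Real.exp (-r * x) := by
  refine IsBigO.of_bound 2 ?_
  filter_upwards [eventually_ge_atTop r⁻¹] with x hx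
  have hrx : 1 ≤ r * x := (inv_le_iff_one_le_mul₀' hr).mp hx
  have hexp : Real.exp (r * x) / 2 ≤ Real.exp (r * x) - 1 := by
    linarith [Real.add_one_le_exp (r * x)]
  rw [Real.norm_of_nonneg (boseKernel_nonneg (zero_le_one.trans hrx)),
    Real.norm_of_nonneg (Real.exp_pos _).le, neg_mul, Real.exp_neg, ← div_eq_mul_inv, ← inv_div]
  exact inv_anti₀ (by positivity) hexp

variable {s : ℂ}

lemma hasDerivAt_mellin_boseKernel (hr : 0 < r) (hs : 1 < s.re) :
    HasDerivAt (mellin fun x => (boseKernel r x : ℂ))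
      (mellin (fun x => Real.log x • (boseKernel r x : ℂ)) s) s := by
  have locallyIntegrable : LocallyIntegrableOn (fun x => (boseKernel r x : ℂ)) (Ioi 0) :=
    (Complex.continuous_ofReal.comp_continuousOn
      (continuousOn_boseKernel hr)).locallyIntegrableOn measurableSet_Ioi
  have decay : boseKernel r =O[atTop] (· ^ (-(s.re + 1))) :=
    (isBigO_boseKernel_atTop hr).trans (isLittleO_exp_neg_mul_rpow_atTop hr _).isBigO
  have pole : boseKernel r =O[𝓝[>] 0] (· ^ (-1 : ℝ)) := by
    simpa only [Real.rpow_neg_one] using isBigO_boseKernel_nhdsGT_zero hr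
  exact (mellin_hasDerivAt_of_isBigO_rpow locallyIntegrable (Complex.isBigO_ofReal_left.mpr decay)
    (lt_add_one _) (Complex.isBigO_ofReal_left.mpr pole) hs).2

lemma mellin_boseKernel_one (hs : 1 < s.re) :
    mellin (fun x => (boseKernel 1 x : ℂ)) s = Complex.Gamma s * riemannZeta s := by
  have expansion : ∀ x ∈ Ioi (0 : ℝ),
      HasSum (fun n : ℕ => (1 : ℂ) * Real.exp (-(n + 1 : ℝ) * x)) (boseKernel 1 x : ℂ) := by
    intro x hx
    have h := hasSum_exp_neg_boseKernel (r := 1) (x := x) (by simpa using hx)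
    convert Complex.hasSum_ofReal.mpr h using 3 with n
    rw [one_mul]
    ring_nf
  have summable : Summable fun n : ℕ => ‖(1 : ℂ)‖ / (n + 1 : ℝ) ^ s.re := by
    refine ((Real.summable_one_div_nat_add_rpow 1 s.re).mpr hs).congr fun n => ?_
    rw [norm_one, abs_of_pos n.cast_add_one_pos]
  have dirichlet := hasSum_mellin (fun n => Or.inr n.cast_add_one_pos) (zero_lt_one.trans hs)
    expansion summable
  rw [← dirichlet.tsum_eq, zeta_eq_tsum_one_div_nat_add_one_cpow hs, ← tsum_mul_left]
  refine tsum_congr fun n => ?_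
  push_cast
  rw [mul_div_assoc]

lemma mellin_boseKernel (hr : 0 < r) (hs : 1 < s.re) :
    mellin (fun x => (boseKernel r x : ℂ)) s =
      (r : ℂ) ^ (-s) * (Complex.Gamma s * riemannZeta s) := by
  have scaling : (fun x => (boseKernel r x : ℂ)) = fun x => (boseKernel 1 (r * x) : ℂ) := by
    simp only [boseKernel, one_mul]
  rw [scaling, mellin_comp_mul_left (fun x => (boseKernel 1 x : ℂ)) s hr,
    mellin_boseKernel_one hs, smul_eq_mul]

lemma riemannZeta_one_sub_eq_mellin_boseKernel (hs : 1 < s.re) :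
    riemannZeta (1 - s) =
      2 * (Complex.cos (π * s / 2) * mellin (fun x => (boseKernel (2 * π) x : ℂ)) s) := by
  have ne_neg_nat (n : ℕ) : s ≠ -n := by
    rintro rfl
    rw [Complex.neg_re, Complex.natCast_re] at hs
    linarith [n.cast_nonneg (α := ℝ)]
  have ne_one : s ≠ 1 := by
    rintro rfl
    exact lt_irrefl _ hs
  rw [riemannZeta_one_sub ne_neg_nat ne_one, mellin_boseKernel two_pi_pos hs]
  push_cast
  ring

lemma deriv_riemannZeta_one_sub (hs : 1 < s.re) :
    deriv riemannZeta (1 - s) =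
      π * Complex.sin (π * s / 2) * mellin (fun x => (boseKernel (2 * π) x : ℂ)) s -
        2 * Complex.cos (π * s / 2) *
          mellin (fun x => Real.log x • (boseKernel (2 * π) x : ℂ)) s := by
  have representation : (fun z => riemannZeta (1 - z)) =ᶠ[𝓝 s] fun z =>
      2 * (Complex.cos (π * z / 2) * mellin (fun x => (boseKernel (2 * π) x : ℂ)) z) := by
    filter_upwards [(isOpen_lt continuous_const Complex.continuous_re).mem_nhds hs] with z hz
    exact riemannZeta_one_sub_eq_mellin_boseKernel hz
  have hcos : HasDerivAt (fun z : ℂ => Complex.cos (π * z / 2))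
      (-Complex.sin (π * s / 2) * (π * 1 / 2)) s :=
    (((hasDerivAt_id s).const_mul (π : ℂ)).div_const 2).ccos
  have hderiv := ((hcos.mul (hasDerivAt_mellin_boseKernel two_pi_pos hs)).const_mul
    2).congr_of_eventuallyEq representation
  have reflect := deriv_comp_const_sub riemannZeta 1 s
  rw [hderiv.deriv] at reflect
  linear_combination reflect

end BoseKernel

lemma mellin_natCast_add_one {E : Type*} [NormedAddCommGroup E] [NormedSpace ℂ E]
    (f : ℝ → E) (n : ℕ) :
    mellin f (n + 1) = ∫ x in Set.Ioi (0 : ℝ), (x : ℂ) ^ n • f x := by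
  simp only [mellin, add_sub_cancel_right, Complex.cpow_natCast]

theorem zeta_deriv_neg_one_eq_integral_general (n : ℕ) :
    deriv riemannZeta (-(2 * n + 1)) = 2 * (-1) ^ n *
      ((∫ x in Set.Ioi (0 : ℝ),
        x ^ (2 * n + 1) * Real.log x / (Real.exp (2 * π * x) - 1)) : ℂ) := by
  have hs : 1 < (((2 * n + 1 : ℕ) : ℂ) + 1).re := by
    rw [Complex.add_re, Complex.natCast_re, Complex.one_re]
    exact_mod_cast Nat.succ_lt_succ (Nat.succ_pos (2 * n))
  have angle : (π : ℂ) * (((2 * n + 1 : ℕ) : ℂ) + 1) / 2 = (n + 1 : ℕ) * π := by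
    push_cast
    ring
  have hcos : Complex.cos ((n + 1 : ℕ) * π) = (-1) ^ (n + 1) := by
    exact_mod_cast Real.cos_nat_mul_pi (n + 1)
  have point : -(2 * n + 1 : ℂ) = 1 - (((2 * n + 1 : ℕ) : ℂ) + 1) := by
    push_cast
    ring
  have integral : mellin (fun x => Real.log x • (boseKernel (2 * π) x : ℂ))
      ((2 * n + 1 : ℕ) + 1) =
      ((∫ x in Set.Ioi (0 : ℝ),
        x ^ (2 * n + 1) * Real.log x / (Real.exp (2 * π * x) - 1)) : ℂ) := by
    simp only [mellin_natCast_add_one, boseKernel, Complex.real_smul, smul_eq_mul,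
      Complex.ofReal_inv, Complex.ofReal_sub, Complex.ofReal_one, div_eq_mul_inv, mul_assoc]
  rw [point, deriv_riemannZeta_one_sub hs, angle, Complex.sin_nat_mul_pi, hcos, integral]
  ring

/-- ζ'(-1) = 2 ∫₀^∞ x log x / (e^{2πx} - 1) dx. -/
theorem zeta_deriv_neg_one_eq_integral :
    deriv riemannZeta (-1) =
      2 * ((∫ x in Set.Ioi (0 : ℝ), x * Real.log x / (Real.exp (2 * π * x) - 1)) : ℂ) := by
  simpa using zeta_deriv_neg_one_eq_integral_general 0
end

section
/- The Glaisher–Kinkelin constant satisfies log A = (1 + log(2π))/12 − (1/(2π²)) ∫₀^∞ x·log x / (eˣ − 1) dx. -/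
/-!
For `1 < re s` the product `Γ(s) ζ(s)` is the Mellin transform of `1 / (eᵗ - 1)`, so its derivative
is the Mellin transform of `log t / (eᵗ - 1)`. Differentiating the functional equation
`ζ(1 - s) = 2 (2π)⁻ˢ cos(πs/2) Γ(s) ζ(s)` at `s = 2`, where the sine vanishes, expresses `ζ'(-1)`
through `Γ(2) ζ(2) = π² / 6` and `(Γζ)'(2)`, and the latter is the integral of `x log x / (eˣ - 1)`.
-/

open Real MeasureTheory Filter

/-- The Bose–Einstein kernel `1 / (eᵗ - 1)`, whose Mellin transform is `Γ ζ`. Its junk value `0`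
at `t = 0` lies outside the domain of integration. -/
noncomputable def boseEinstein (t : ℝ) : ℝ := (exp t - 1)⁻¹

lemma boseEinstein_pos {t : ℝ} (ht : 0 < t) : 0 < boseEinstein t :=
  inv_pos.mpr (sub_pos.mpr (one_lt_exp_iff.mpr ht))

lemma hasSum_boseEinstein {t : ℝ} (ht : 0 < t) :
    HasSum (fun n : ℕ ↦ exp (-(n + 1) * t)) (boseEinstein t) := by
  have hratio : exp (-t) < 1 := exp_lt_one_iff.mpr (neg_neg_of_pos ht)
  have hgeom := (hasSum_geometric_of_lt_one (exp_pos (-t)).le hratio).mul_left (exp (-t))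
  have hterm (n : ℕ) : exp (-t) * exp (-t) ^ n = exp (-(n + 1) * t) := by
    rw [← exp_nat_mul, ← exp_add]
    ring_nf
  have hvalue : exp (-t) * (1 - exp (-t))⁻¹ = boseEinstein t := by
    rw [boseEinstein, exp_neg, ← mul_inv, mul_sub, mul_one, mul_inv_cancel₀ (exp_ne_zero t)]
  simpa only [hterm, hvalue] using hgeom

lemma continuousOn_boseEinstein : ContinuousOn boseEinstein (Set.Ioi 0) :=
  ContinuousOn.inv₀ (by fun_prop) fun _ ht ↦ (inv_pos.mp (boseEinstein_pos ht)).ne'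

lemma boseEinstein_isBigO_atTop : boseEinstein =O[atTop] fun t ↦ exp (-t) := by
  refine Asymptotics.IsBigO.of_bound 2 ?_
  filter_upwards [eventually_ge_atTop 1] with t ht
  have hexp : 2 ≤ exp t := by linarith [add_one_le_exp t]
  rw [norm_of_nonneg (boseEinstein_pos (by linarith)).le, norm_of_nonneg (exp_pos _).le]
  calc boseEinstein t ≤ (exp t / 2)⁻¹ := inv_anti₀ (by positivity) (by linarith)
    _ = 2 * exp (-t) := by rw [inv_div, exp_neg, div_eq_mul_inv]

lemma boseEinstein_isBigO_nhdsGT_zero :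
    boseEinstein =O[nhdsWithin 0 (Set.Ioi 0)] fun t ↦ t ^ (-1 : ℝ) := by
  refine Asymptotics.IsBigO.of_bound' ?_
  filter_upwards [self_mem_nhdsWithin] with t (ht : 0 < t)
  rw [rpow_neg_one, norm_of_nonneg (boseEinstein_pos ht).le, norm_of_nonneg (inv_pos.mpr ht).le]
  exact inv_anti₀ ht (by linarith [add_one_le_exp t])

lemma mellin_boseEinstein {s : ℂ} (hs : 1 < s.re) :
    mellin (fun t ↦ (boseEinstein t : ℂ)) s = Complex.Gamma s * riemannZeta s := by
  have hexpansion (t : ℝ) (ht : t ∈ Set.Ioi 0) :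
      HasSum (fun n : ℕ ↦ (1 : ℂ) * (exp (-(n + 1) * t) : ℝ)) (boseEinstein t) := by
    simpa only [one_mul] using Complex.hasSum_ofReal.mpr (hasSum_boseEinstein ht)
  have hsummable : Summable fun n : ℕ ↦ ‖(1 : ℂ)‖ / ((n : ℝ) + 1) ^ s.re := by
    simpa using (summable_nat_add_iff 1).mpr (summable_one_div_nat_rpow.mpr hs)
  have hmellin := hasSum_mellin (fun n : ℕ ↦ Or.inr (by positivity)) (by linarith)
    hexpansion hsummable
  rw [← hmellin.tsum_eq, zeta_eq_tsum_one_div_nat_add_one_cpow hs, ← tsum_mul_left]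
  simp [div_eq_mul_inv]

lemma hasDerivAt_mellin_boseEinstein {s : ℂ} (hs : 1 < s.re) :
    HasDerivAt (mellin fun t ↦ (boseEinstein t : ℂ))
      (mellin (fun t ↦ ((log t * boseEinstein t : ℝ) : ℂ)) s) s := by
  have hcont : ContinuousOn (fun t ↦ (boseEinstein t : ℂ)) (Set.Ioi 0) :=
    Complex.continuous_ofReal.comp_continuousOn continuousOn_boseEinstein
  have htop : boseEinstein =O[atTop] fun t ↦ t ^ (-(s.re + 1)) :=
    boseEinstein_isBigO_atTop.trans <| by
      simpa only [neg_one_mul] using (isLittleO_exp_neg_mul_rpow_atTop one_pos _).isBigO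
  simpa only [Complex.real_smul, Complex.ofReal_mul] using
    (mellin_hasDerivAt_of_isBigO_rpow (hcont.locallyIntegrableOn measurableSet_Ioi)
      (Complex.isBigO_ofReal_left.mpr htop) (lt_add_one _)
      (Complex.isBigO_ofReal_left.mpr boseEinstein_isBigO_nhdsGT_zero) hs).2

lemma mellin_ofReal (f : ℝ → ℝ) (σ : ℝ) :
    mellin (fun t ↦ (f t : ℂ)) σ = ((∫ t in Set.Ioi 0, t ^ (σ - 1) * f t : ℝ) : ℂ) := by
  rw [mellin, ← integral_complex_ofReal]
  refine setIntegral_congr_fun measurableSet_Ioi fun t (ht : 0 < t) ↦ ?_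
  simp [Complex.ofReal_cpow ht.le]

lemma deriv_Gamma_mul_riemannZeta_ofReal {σ : ℝ} (hσ : 1 < σ) :
    deriv (fun s ↦ Complex.Gamma s * riemannZeta s) σ =
      ((∫ t in Set.Ioi 0, t ^ (σ - 1) * (log t * boseEinstein t) : ℝ) : ℂ) := by
  have hmellin : (fun s ↦ Complex.Gamma s * riemannZeta s) =ᶠ[nhds (σ : ℂ)]
      mellin fun t ↦ (boseEinstein t : ℂ) := by
    filter_upwards [Complex.continuous_re.continuousAt.eventually_const_lt hσ] with s hs
    exact (mellin_boseEinstein hs).symm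
  rw [hmellin.deriv_eq, (hasDerivAt_mellin_boseEinstein (Complex.ofReal_re σ ▸ hσ)).deriv,
    mellin_ofReal]

lemma hasDerivAt_two_pi_cpow_neg_mul_cos (s : ℂ) :
    HasDerivAt (fun z : ℂ ↦ 2 * (2 * π : ℂ) ^ (-z) * Complex.cos (π * z / 2))
      (-(2 * (2 * π : ℂ) ^ (-s)) *
        (log (2 * π) * Complex.cos (π * s / 2) + π / 2 * Complex.sin (π * s / 2))) s := by
  have hpow : HasDerivAt (fun z : ℂ ↦ (2 * π : ℂ) ^ (-z))
      ((2 * π : ℂ) ^ (-s) * Complex.log (2 * π) * -1) s :=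
    (hasDerivAt_id s).neg.const_cpow (Or.inl (by simp [pi_ne_zero]))
  have hcos : HasDerivAt (fun z : ℂ ↦ Complex.cos (π * z / 2))
      (-Complex.sin (π * s / 2) * (π * 1 / 2)) s :=
    (((hasDerivAt_id s).const_mul (π : ℂ)).div_const 2).ccos
  have hlog : Complex.log (2 * π) = log (2 * π) := by
    rw [Complex.ofReal_log (by positivity), Complex.ofReal_mul, Complex.ofReal_ofNat]
  refine ((hpow.const_mul 2).mul hcos).congr_deriv ?_
  rw [hlog]
  ring

lemma deriv_riemannZeta_one_sub_s1 {s : ℂ} (hs : ∀ n : ℕ, s ≠ -n) (hs' : s ≠ 1) :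
    deriv riemannZeta (1 - s) = 2 * (2 * π : ℂ) ^ (-s) *
      ((log (2 * π) * Complex.cos (π * s / 2) + π / 2 * Complex.sin (π * s / 2)) *
          (Complex.Gamma s * riemannZeta s) -
        Complex.cos (π * s / 2) * deriv (fun z ↦ Complex.Gamma z * riemannZeta z) s) := by
  have hΓ := Complex.differentiableAt_Gamma s hs
  have hfunctional : (fun z ↦ riemannZeta (1 - z)) =ᶠ[nhds s] fun z ↦
      2 * (2 * π : ℂ) ^ (-z) * Complex.cos (π * z / 2) * (Complex.Gamma z * riemannZeta z) := by
    filter_upwards [hΓ.continuousAt.eventually_ne (Complex.Gamma_ne_zero hs),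
      eventually_ne_nhds hs'] with z hz hz'
    have hpole (n : ℕ) : z ≠ -n := fun h ↦ hz (h ▸ Complex.Gamma_neg_nat_eq_zero n)
    rw [riemannZeta_one_sub hpole hz']
    ring
  have hderiv := ((hasDerivAt_two_pi_cpow_neg_mul_cos s).mul
    (hΓ.mul (differentiableAt_riemannZeta hs')).hasDerivAt).congr_of_eventuallyEq hfunctional
  rw [← neg_inj, ← deriv_comp_const_sub, hderiv.deriv]
  simp only [Pi.mul_def]
  ring

lemma deriv_riemannZeta_neg_one :
    deriv riemannZeta (-1) =
      deriv (fun s ↦ Complex.Gamma s * riemannZeta s) 2 / (2 * π ^ 2) - log (2 * π) / 12 := by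
  have hΓζ : Complex.Gamma 2 * riemannZeta 2 = π ^ 2 / 6 := by
    rw [riemannZeta_two, Complex.Gamma_ofNat_eq_factorial]
    simp
  have hpole (n : ℕ) : (2 : ℂ) ≠ -n := by
    rw [Ne, eq_neg_iff_add_eq_zero]
    exact_mod_cast (by lia : 2 + n ≠ 0)
  have hpow : (2 * π : ℂ) ^ (-2 : ℂ) = ((2 * π : ℂ) ^ 2)⁻¹ := by
    rw [Complex.cpow_neg, Complex.cpow_ofNat]
  have hπ : (π : ℂ) ≠ 0 := Complex.ofReal_ne_zero.mpr pi_ne_zero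
  rw [show (-1 : ℂ) = 1 - 2 by norm_num, deriv_riemannZeta_one_sub_s1 hpole (by norm_num), hΓζ, hpow,
    mul_div_cancel_right₀ _ two_ne_zero, Complex.cos_pi, Complex.sin_pi]
  field_simp
  ring

/-- log A = (1 + log(2π))/12 − (1/(2π²)) ∫₀^∞ x log x / (eˣ − 1) dx. -/
theorem logA_eq_integral :
    logA = (((1 + Real.log (2 * π)) / 12
      - 1 / (2 * π ^ 2) * (∫ x in Set.Ioi (0 : ℝ), x * Real.log x / (Real.exp x - 1)) : ℝ) : ℂ) := by
  have hderiv : deriv (fun s ↦ Complex.Gamma s * riemannZeta s) 2 =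
      ((∫ x in Set.Ioi (0 : ℝ), x * Real.log x / (Real.exp x - 1) : ℝ) : ℂ) := by
    simpa [boseEinstein, div_eq_mul_inv, mul_assoc, show (2 : ℝ) - 1 = 1 by norm_num] using
      deriv_Gamma_mul_riemannZeta_ofReal one_lt_two
  rw [logA, deriv_riemannZeta_neg_one, hderiv]
  push_cast
  ring
end

section
/- For every real z > 0, the derivative of the Hurwitz zeta function at s = −1 admits the Hermite-type integral representation ζ'(−1, z) = (z²/2)·log z − z²/4 − (z/2)·log z + 2z ∫₀^∞ arctan(x/z)/(e^{2πx} − 1) dx + ∫₀^∞ x·log(x² + z²)/(e^{2πx} − 1) dx. -/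
/-!
Expanding `1 / (e ^ (2πx) - 1)` geometrically and comparing with the partial fractions of the
cotangent gives Legendre's integral
`1 / (1 - e ^ (-t)) = 1 / 2 + 1 / t + 2 ∫₀^∞ sin (x t) / (e ^ (2πx) - 1) dx`.
For `1 < Re s` the Mellin transform of `e ^ (-z t) / (1 - e ^ (-t))` is `Γ(s) ζ(s, z)`. Inserting
Legendre's integral and exchanging the two integrals yields Hermite's formula
`ζ(s, z) = z ^ (-s) / 2 + z ^ (1 - s) / (s - 1) + 2 ∫₀^∞ k(s, x) / (e ^ (2πx) - 1) dx`
with `k(s, x) = ((z - i x) ^ (-s) - (z + i x) ^ (-s)) / (2 i)`. The last integral is entire in `s`,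
so the formula persists for all `s ≠ 1`. Differentiating it at `s = -1` gives the theorem, because
`∂k/∂s (-1, x)` is the imaginary part of `w log w` at `w = z + i x`.
-/

open Real MeasureTheory Filter

open Set
open scoped Topology

section ParametricIntegral

variable {α E : Type*} [MeasurableSpace α] {μ : Measure α} [NormedAddCommGroup E]

lemma aestronglyMeasurable_deriv_of_eventually {𝕜 : Type*} [NontriviallyNormedField 𝕜]
    [NormedSpace 𝕜 E] {F : 𝕜 → α → E} {s : 𝕜}
    (hF_meas : ∀ᶠ w in 𝓝 s, AEStronglyMeasurable (F w) μ)
    (hF_diff : ∀ᵐ a ∂μ, DifferentiableAt 𝕜 (F · a) s) :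
    AEStronglyMeasurable (fun a ↦ deriv (F · a) s) μ := by
  obtain ⟨u, hu, hu_meas⟩ := exists_seq_forall_of_frequently
    (hF_meas.filter_mono (nhdsWithin_le_nhds (s := {s}ᶜ))).frequently
  refine aestronglyMeasurable_of_tendsto_ae atTop
    (f := fun n a ↦ slope (F · a) s (u n)) (fun n ↦ ?_) ?_
  · simp only [slope_def_module]
    exact ((hu_meas n).sub hF_meas.self_of_nhds).const_smul _
  · filter_upwards [hF_diff] with a ha
    exact ha.hasDerivAt.tendsto_slope.comp hu

/-- Cauchy's estimate turns the bound on `F` into a bound on its derivative, so that no separate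
domination of the derivative is required. -/
theorem hasDerivAt_integral_of_dominated_of_differentiableOn [NormedSpace ℂ E]
    {F : ℂ → α → E} {bound : α → ℝ} {U : Set ℂ} {s : ℂ} (hU : U ∈ 𝓝 s)
    (hF_meas : ∀ w ∈ U, AEStronglyMeasurable (F w) μ)
    (hF_diff : ∀ᵐ a ∂μ, DifferentiableOn ℂ (F · a) U)
    (hF_bound : ∀ᵐ a ∂μ, ∀ w ∈ U, ‖F w a‖ ≤ bound a) (hbound : Integrable bound μ) :
    Integrable (fun a ↦ deriv (F · a) s) μ ∧
      HasDerivAt (fun w ↦ ∫ a, F w a ∂μ) (∫ a, deriv (F · a) s ∂μ) s := by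
  obtain ⟨r, hr, hrU⟩ := Metric.mem_nhds_iff.1 hU
  have hsphere {w ζ : ℂ} (hw : w ∈ Metric.ball s (r / 2)) (hζ : ζ ∈ Metric.closedBall w (r / 2)) :
      ζ ∈ Metric.ball s r := by
    rw [Metric.mem_ball] at hw ⊢
    rw [Metric.mem_closedBall] at hζ
    linarith [dist_triangle ζ w s]
  have hdiffAt {a : α} (ha : DifferentiableOn ℂ (F · a) U) {w : ℂ} (hw : w ∈ Metric.ball s r) :
      DifferentiableAt ℂ (F · a) w :=
    ha.differentiableAt (mem_of_superset (Metric.isOpen_ball.mem_nhds hw) hrU)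
  refine hasDerivAt_integral_of_dominated_loc_of_deriv_le
    (F' := fun w a ↦ deriv (F · a) w) (bound := fun a ↦ bound a / (r / 2))
    (Metric.ball_mem_nhds s (half_pos hr)) (eventually_of_mem hU hF_meas) ?_ ?_ ?_
    (hbound.div_const _) ?_
  · exact hbound.mono' (hF_meas s (mem_of_mem_nhds hU))
      (hF_bound.mono fun a ha ↦ ha s (mem_of_mem_nhds hU))
  · exact aestronglyMeasurable_deriv_of_eventually (eventually_of_mem hU hF_meas)
      (hF_diff.mono fun a ha ↦ ha.differentiableAt hU)
  · filter_upwards [hF_diff, hF_bound] with a ha_diff ha_bound w hw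
    refine Complex.norm_deriv_le_of_forall_mem_sphere_norm_le (half_pos hr)
      (DifferentiableOn.diffContOnCl fun ζ hζ ↦ ?_)
      fun ζ hζ ↦ ha_bound ζ (hrU (hsphere hw (Metric.sphere_subset_closedBall hζ)))
    exact (hdiffAt ha_diff (hsphere hw (Metric.closure_ball_subset_closedBall hζ)))
      |>.differentiableWithinAt
  · filter_upwards [hF_diff] with a ha w hw
    exact (hdiffAt ha (Metric.ball_subset_ball (half_le_self hr.le) hw)).hasDerivAt

end ParametricIntegral

lemma norm_cpow_sub_one_mul_cexp_neg_mul (s r : ℂ) {t : ℝ} (ht : 0 < t) :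
    ‖(t : ℂ) ^ (s - 1) * Complex.exp (-(r * t))‖ =
      t ^ (s.re - 1) * Real.exp (-(r.re * t)) := by
  rw [norm_mul, Complex.norm_cpow_eq_rpow_re_of_pos ht, Complex.norm_exp]
  simp

lemma integrableOn_rpow_mul_exp_neg_mul {σ b : ℝ} (hσ : -1 < σ) (hb : 0 < b) :
    IntegrableOn (fun t : ℝ ↦ t ^ σ * Real.exp (-(b * t))) (Ioi 0) := by
  simpa using integrableOn_rpow_mul_exp_neg_mul_rpow hσ one_pos hb

lemma mellinConvergent_cexp_neg_mul {s r : ℂ} (hs : 0 < s.re) (hr : 0 < r.re) :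
    MellinConvergent (fun t ↦ Complex.exp (-(r * t))) s := by
  refine (integrableOn_rpow_mul_exp_neg_mul (by linarith : -1 < s.re - 1) hr).mono'
    (by fun_prop) (ae_restrict_of_forall_mem measurableSet_Ioi fun t ht ↦ ?_)
  exact (norm_cpow_sub_one_mul_cexp_neg_mul s r ht).le

lemma differentiableAt_mellin_cexp_neg_mul {s r : ℂ} (hs : 0 < s.re) (hr : 0 < r.re) :
    DifferentiableAt ℂ (fun r : ℂ ↦ mellin (fun t ↦ Complex.exp (-(r * t))) s) r := by
  have hU : {w : ℂ | r.re / 2 < w.re} ∈ 𝓝 r :=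
    (isOpen_lt continuous_const Complex.continuous_re).mem_nhds (half_lt_self hr)
  refine (hasDerivAt_integral_of_dominated_of_differentiableOn hU (fun w _ ↦ by fun_prop)
    (ae_of_all _ fun t ↦ by fun_prop) (ae_restrict_of_forall_mem measurableSet_Ioi ?_)
    (integrableOn_rpow_mul_exp_neg_mul (by linarith : -1 < s.re - 1)
      (half_pos hr))).2.differentiableAt
  intro t (ht : 0 < t) w (hw : r.re / 2 < w.re)
  rw [smul_eq_mul, norm_cpow_sub_one_mul_cexp_neg_mul s w ht]
  gcongr

/-- Both sides are holomorphic in `r` on the right half-plane and agree for real `r`. -/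
theorem hasMellin_cexp_neg_mul {s r : ℂ} (hs : 0 < s.re) (hr : 0 < r.re) :
    HasMellin (fun t ↦ Complex.exp (-(r * t))) s (Complex.Gamma s * r ^ (-s)) := by
  refine ⟨mellinConvergent_cexp_neg_mul hs hr, ?_⟩
  have hopen : IsOpen {w : ℂ | 0 < w.re} := isOpen_lt continuous_const Complex.continuous_re
  have hleft : AnalyticOnNhd ℂ (fun r : ℂ ↦ mellin (fun t ↦ Complex.exp (-(r * t))) s)
      {w | 0 < w.re} :=
    DifferentiableOn.analyticOnNhd
      (fun w hw ↦ (differentiableAt_mellin_cexp_neg_mul hs hw).differentiableWithinAt) hopen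
  have hright : AnalyticOnNhd ℂ (fun r : ℂ ↦ Complex.Gamma s * r ^ (-s)) {w | 0 < w.re} :=
    DifferentiableOn.analyticOnNhd (fun w hw ↦ ((differentiableAt_id.cpow_const
      (Or.inl hw)).const_mul _).differentiableWithinAt) hopen
  have hreal (x : ℝ) (hx : 0 < x) :
      mellin (fun t ↦ Complex.exp (-(x * t))) s = Complex.Gamma s * (x : ℂ) ^ (-s) := by
    simp only [mellin, smul_eq_mul]
    rw [Complex.integral_cpow_mul_exp_neg_mul_Ioi hs hx, one_div, Complex.inv_cpow _ _
      (Complex.arg_ofReal_of_nonneg hx.le ▸ pi_pos.ne), Complex.cpow_neg, mul_comm]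
  have htendsto : Tendsto ((↑) : ℝ → ℂ) (𝓝[≠] 1) (𝓝[≠] 1) :=
    Complex.continuous_ofReal.continuousWithinAt.tendsto_nhdsWithin fun x hx ↦ by simpa using hx
  refine hleft.eqOn_of_preconnected_of_frequently_eq hright
    (convex_halfSpace_re_gt 0).isPreconnected (z₀ := 1) (by simp) ?_ hr
  refine htendsto.frequently (Eventually.frequently ?_)
  filter_upwards [nhdsWithin_le_nhds (Ioi_mem_nhds one_pos)] with x hx using hreal x hx

/-- The weight `1 / (e ^ (2πx) - 1)` of Hermite's integral. -/
noncomputable def hermiteWeight (x : ℝ) : ℝ := (Real.exp (2 * π * x) - 1)⁻¹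

lemma hermiteWeight_nonneg {x : ℝ} (hx : 0 ≤ x) : 0 ≤ hermiteWeight x :=
  inv_nonneg.2 (sub_nonneg.2 (Real.one_le_exp (by positivity)))

@[fun_prop]
lemma measurable_hermiteWeight : Measurable hermiteWeight := by
  unfold hermiteWeight
  fun_prop

lemma mul_hermiteWeight_le {x : ℝ} (hx : 0 < x) :
    x * hermiteWeight x ≤ Real.exp (-(π * x)) := by
  have hsinh : π * x ≤ Real.sinh (π * x) := Real.self_le_sinh_iff.2 (by positivity)
  have hsplit : Real.exp (2 * π * x) - 1 = 2 * Real.sinh (π * x) * Real.exp (π * x) := by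
    rw [Real.sinh_eq, mul_div_cancel₀ _ two_ne_zero, sub_mul, ← Real.exp_add, ← Real.exp_add,
      neg_add_cancel, Real.exp_zero, ← two_mul, mul_assoc]
  have hx_le : x ≤ 2 * Real.sinh (π * x) := by nlinarith [pi_gt_three]
  have hsinh_pos : 0 < 2 * Real.sinh (π * x) := hx.trans_le hx_le
  rw [hermiteWeight, hsplit, mul_inv, ← mul_assoc, Real.exp_neg]
  exact mul_le_of_le_one_left (by positivity) (mul_inv_le_one_of_le₀ hx_le hsinh_pos.le)

lemma integrableOn_mul_hermiteWeight :
    IntegrableOn (fun x ↦ x * hermiteWeight x) (Ioi 0) := by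
  have hexp : IntegrableOn (fun x : ℝ ↦ Real.exp (-(π * x))) (Ioi 0) := by
    simpa only [neg_mul] using exp_neg_integrableOn_Ioi 0 pi_pos
  refine hexp.mono' (by fun_prop)
    (ae_restrict_of_forall_mem measurableSet_Ioi fun x (hx : 0 < x) ↦ ?_)
  rw [Real.norm_of_nonneg (mul_nonneg hx.le (hermiteWeight_nonneg hx.le))]
  exact mul_hermiteWeight_le hx

lemma hasSum_exp_hermiteWeight {x : ℝ} (hx : 0 < x) :
    HasSum (fun n : ℕ ↦ Real.exp (-(2 * π * (n + 1) * x))) (hermiteWeight x) := by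
  have hlt : Real.exp (-(2 * π * x)) < 1 := by
    rw [Real.exp_lt_one_iff, neg_lt_zero]
    positivity
  have hgeom := (hasSum_geometric_of_lt_one (Real.exp_pos _).le hlt).mul_left
    (Real.exp (-(2 * π * x)))
  convert! hgeom using 1
  · funext n
    rw [← Real.exp_nat_mul, ← Real.exp_add]
    ring_nf
  · rw [hermiteWeight, Real.exp_neg, ← mul_inv, mul_one_sub, mul_inv_cancel₀ (Real.exp_ne_zero _)]

/-- The Mittag-Leffler expansion of the cotangent, on the imaginary axis when `t` is real. -/
lemma hasSum_div_sq_add_sq {t : ℂ} (ht : Complex.exp t ≠ 1) :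
    HasSum (fun n : ℕ ↦ t / (t ^ 2 + (2 * π * (n + 1)) ^ 2))
      ((1 / (1 - Complex.exp (-t)) - 1 / t - 1 / 2) / 2) := by
  have hπ : (π : ℂ) ≠ 0 := mod_cast pi_ne_zero
  obtain ⟨x, rfl⟩ : ∃ x, t = -(2 * π * Complex.I) * x :=
    ⟨Complex.I * t / (2 * π), by field_simp; simp⟩
  have hx : x ∈ Complex.integerComplement := by
    rintro ⟨n, rfl⟩
    exact ht (Complex.exp_eq_one_iff.2 ⟨-n, by push_cast; ring⟩)
  have hx₀ : x ≠ 0 := Complex.integerComplement.ne_zero hx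
  have hexp : 1 - Complex.exp (2 * π * Complex.I * x) ≠ 0 := by
    rw [sub_ne_zero, ne_comm]
    rwa [neg_mul, Complex.exp_neg, Ne, inv_eq_one] at ht
  have hcot := ((summable_cotTerm hx).hasSum_iff_tendsto_nat.2
    (tendsto_logDeriv_euler_cot_sub hx)).mul_left (Complex.I / (4 * π))
  convert! hcot using 1
  · funext n
    have hsq : (-(2 * π * Complex.I) * x) ^ 2 + (2 * π * (n + 1)) ^ 2 =
        -(2 * π) ^ 2 * ((x + (n + 1)) * (x - (n + 1))) := by
      linear_combination 4 * π ^ 2 * x ^ 2 * Complex.I_sq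
    rw [cotTerm_identity hx, hsq]
    field
  · rw [Complex.cot_pi_eq_exp_ratio, ← neg_mul, neg_neg]
    generalize Complex.exp (2 * π * Complex.I * x) = E at *
    field_simp
    linear_combination 4 * (1 - E) * Complex.I_sq

lemma integrableOn_sin_mul_exp_neg_mul {a : ℝ} (t : ℝ) (ha : 0 < a) :
    IntegrableOn (fun x ↦ Real.sin (x * t) * Real.exp (-(a * x))) (Ioi 0) := by
  have hexp : IntegrableOn (fun x : ℝ ↦ Real.exp (-(a * x))) (Ioi 0) := by
    simpa only [neg_mul] using exp_neg_integrableOn_Ioi 0 ha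
  refine hexp.bdd_mul (c := 1) (by fun_prop) (ae_of_all _ fun x ↦ ?_)
  simpa using Real.abs_sin_le_one (x * t)

lemma integral_sin_mul_exp_neg_mul {a : ℝ} (t : ℝ) (ha : 0 < a) :
    ∫ x in Ioi (0 : ℝ), Real.sin (x * t) * Real.exp (-(a * x)) = t / (t ^ 2 + a ^ 2) := by
  have hre : ((-a : ℂ) + t * Complex.I).re < 0 := by simp [ha]
  have him (x : ℝ) : RCLike.im (Complex.exp ((-a + t * Complex.I) * x)) =
      Real.sin (x * t) * Real.exp (-(a * x)) := by
    simp [Complex.exp_im, mul_comm]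
  simp_rw [← him]
  rw [integral_im (integrableOn_exp_mul_complex_Ioi hre 0), integral_exp_mul_complex_Ioi hre 0]
  simp [Complex.div_im, Complex.normSq_apply]
  field

lemma integral_mul_exp_neg_mul {a : ℝ} (ha : 0 < a) :
    ∫ x in Ioi (0 : ℝ), x * Real.exp (-(a * x)) = 1 / a ^ 2 := by
  have h := Real.integral_rpow_mul_exp_neg_mul_Ioi (a := 2) two_pos ha
  norm_num at h
  simpa using h

lemma integral_norm_sin_mul_exp_neg_mul_le {a : ℝ} (t : ℝ) (ha : 0 < a) :
    ∫ x in Ioi (0 : ℝ), ‖Real.sin (x * t) * Real.exp (-(a * x))‖ ≤ |t| * (1 / a ^ 2) := by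
  have hint : IntegrableOn (fun x ↦ x * Real.exp (-(a * x))) (Ioi 0) := by
    simpa using integrableOn_rpow_mul_exp_neg_mul (σ := 1) (by norm_num) ha
  rw [← integral_mul_exp_neg_mul ha, ← integral_const_mul]
  refine setIntegral_mono_on (integrableOn_sin_mul_exp_neg_mul t ha).norm
    (hint.const_mul _) measurableSet_Ioi fun x (hx : 0 < x) ↦ ?_
  rw [norm_mul, Real.norm_eq_abs, Real.norm_eq_abs, Real.abs_exp, ← mul_assoc]
  gcongr
  simpa [abs_mul, abs_of_pos hx, mul_comm] using Real.abs_sin_le_abs (x := x * t)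

theorem integral_sin_mul_hermiteWeight {t : ℝ} (ht : t ≠ 0) :
    ∫ x in Ioi (0 : ℝ), Real.sin (x * t) * hermiteWeight x =
      (1 / (1 - Real.exp (-t)) - 1 / t - 1 / 2) / 2 := by
  have hpos (n : ℕ) : 0 < 2 * π * ((n : ℝ) + 1) := by positivity
  have hsummable : Summable fun n : ℕ ↦ |t| * (1 / (2 * π * ((n : ℝ) + 1)) ^ 2) := by
    have hsq := (summable_nat_add_iff 1).2 (Real.summable_one_div_nat_pow.2 one_lt_two)
    refine (hsq.mul_left (|t| / (2 * π) ^ 2)).congr fun n ↦ ?_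
    push_cast
    field
  have hint := hasSum_integral_of_summable_integral_norm
    (fun n : ℕ ↦ integrableOn_sin_mul_exp_neg_mul t (hpos n))
    (hsummable.of_nonneg_of_le (fun n ↦ integral_nonneg fun x ↦ norm_nonneg _)
      fun n ↦ integral_norm_sin_mul_exp_neg_mul_le t (hpos n))
  simp_rw [integral_sin_mul_exp_neg_mul t (hpos _)] at hint
  have hcot : HasSum (fun n : ℕ ↦ t / (t ^ 2 + (2 * π * (n + 1)) ^ 2))
      ((1 / (1 - Real.exp (-t)) - 1 / t - 1 / 2) / 2) := by
    rw [← Complex.hasSum_ofReal]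
    push_cast
    exact hasSum_div_sq_add_sq (mod_cast mt (Real.exp_eq_one_iff t).1 ht)
  rw [← hint.unique hcot]
  exact setIntegral_congr_fun measurableSet_Ioi fun x hx ↦
    ((hasSum_exp_hermiteWeight hx).mul_left _).tsum_eq.symm

/-- Hermite's integrand without its weight, continued to complex `s`: by conjugating `z + ix` it is
`|z + ix| ^ (-s) * sin (s * arctan (x / z))` for `0 < z`. The form with two complex powers is chosen
because it is visibly entire in `s` and a combination of Mellin transforms of exponentials. -/
noncomputable def hermiteKernel (z : ℝ) (s : ℂ) (x : ℝ) : ℂ :=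
  ((z - x * Complex.I) ^ (-s) - (z + x * Complex.I) ^ (-s)) / (2 * Complex.I)

section HermiteKernel

variable {z : ℝ}

lemma add_mul_I_mem_slitPlane (hz : 0 < z) (x : ℝ) : z + x * Complex.I ∈ Complex.slitPlane :=
  Or.inl (by simpa using hz)

lemma sub_mul_I_mem_slitPlane (hz : 0 < z) (x : ℝ) : z - x * Complex.I ∈ Complex.slitPlane :=
  Or.inl (by simpa using hz)

lemma hasMellin_cexp_neg_mul_mul_sin {s : ℂ} (hs : 0 < s.re) (hz : 0 < z) (x : ℝ) :
    HasMellin (fun t ↦ Complex.exp (-(z * t)) * Complex.sin (x * t)) s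
      (Complex.Gamma s * hermiteKernel z s x) := by
  have hsub : HasMellin (fun t ↦ Complex.exp (-((z - x * Complex.I) * t))) s _ :=
    hasMellin_cexp_neg_mul hs (by simpa using hz)
  have hadd : HasMellin (fun t ↦ Complex.exp (-((z + x * Complex.I) * t))) s _ :=
    hasMellin_cexp_neg_mul hs (by simpa using hz)
  have hdiff := hasMellin_sub hsub.1 hadd.1
  have hsin : (fun t : ℝ ↦ Complex.exp (-(z * t)) * Complex.sin (x * t)) = fun t : ℝ ↦
      (Complex.exp (-((z - x * Complex.I) * t)) - Complex.exp (-((z + x * Complex.I) * t))) /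
        (2 * Complex.I) := by
    funext t
    have hsub_exp : -((z - x * Complex.I) * t) = -(z * t) + x * t * Complex.I := by ring
    have hadd_exp : -((z + x * Complex.I) * t) = -(z * t) + -(x * t) * Complex.I := by ring
    rw [hsub_exp, hadd_exp, Complex.exp_add, Complex.exp_add, Complex.exp_mul_I,
      Complex.exp_mul_I, Complex.cos_neg, Complex.sin_neg]
    field
  rw [hsin]
  refine ⟨hdiff.1.div_const _, ?_⟩
  rw [mellin_div_const, hdiff.2, hsub.2, hadd.2, hermiteKernel]
  ring

lemma norm_cpow_le_pow {w p : ℂ} {M : ℝ} {N : ℕ} (hw : w ≠ 0) (hwM : ‖w‖ ≤ M)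
    (hwM_inv : ‖w‖⁻¹ ≤ M) (hp : ‖p‖ ≤ N) : ‖w ^ p‖ ≤ (M * Real.exp π) ^ N := by
  have hw_pos : 0 < ‖w‖ := norm_pos_iff.2 hw
  have hM : 0 < M := hw_pos.trans_le hwM
  have hlog_norm : |Real.log ‖w‖| ≤ Real.log M := by
    refine abs_le'.2 ⟨Real.log_le_log hw_pos hwM, ?_⟩
    rw [← Real.log_inv]
    exact Real.log_le_log (inv_pos.2 hw_pos) hwM_inv
  have hlog : ‖Complex.log w‖ ≤ Real.log M + π := by
    refine (Complex.norm_le_abs_re_add_abs_im _).trans ?_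
    rw [Complex.log_re, Complex.log_im]
    exact add_le_add hlog_norm (Complex.abs_arg_le_pi w)
  calc ‖w ^ p‖ ≤ Real.exp ‖Complex.log w * p‖ := by
        rw [Complex.cpow_def_of_ne_zero hw, Complex.norm_exp]
        exact Real.exp_le_exp.2 (Complex.re_le_norm _)
    _ ≤ Real.exp ((Real.log M + π) * N) := by
        rw [norm_mul]
        gcongr
        exact (norm_nonneg _).trans hlog
    _ = (M * Real.exp π) ^ N := by
        rw [mul_comm, Real.exp_nat_mul, Real.exp_add, Real.exp_log hM]

lemma norm_hermiteKernel_le (hz : 0 < z) {s : ℂ} {N : ℕ} (hs : ‖s‖ + 1 ≤ N) {x : ℝ} (hx : 0 ≤ x) :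
    ‖hermiteKernel z s x‖ ≤ ‖s‖ * ((z + z⁻¹ + x) * Real.exp π) ^ N * x := by
  have hderiv (ζ : ℂ) (hζ : ζ ∈ {ζ : ℂ | z ≤ ζ.re} ∩ Metric.closedBall 0 (z + x)) :
      HasDerivWithinAt (· ^ (-s)) (-s * ζ ^ (-s - 1) * 1)
        ({ζ : ℂ | z ≤ ζ.re} ∩ Metric.closedBall 0 (z + x)) ζ :=
    ((hasDerivAt_id ζ).cpow_const (Or.inl (hz.trans_le hζ.1))).hasDerivWithinAt
  have hbound (ζ : ℂ) (hζ : ζ ∈ {ζ : ℂ | z ≤ ζ.re} ∩ Metric.closedBall 0 (z + x)) :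
      ‖-s * ζ ^ (-s - 1) * 1‖ ≤ ‖s‖ * ((z + z⁻¹ + x) * Real.exp π) ^ N := by
    have hzζ : z ≤ ‖ζ‖ := hζ.1.trans (Complex.re_le_norm ζ)
    have hz_inv : 0 < z⁻¹ := inv_pos.2 hz
    have hζ_inv : ‖ζ‖⁻¹ ≤ z⁻¹ := inv_anti₀ hz hzζ
    have hζ_le : ‖ζ‖ ≤ z + x := by simpa using hζ.2
    rw [mul_one, norm_mul, norm_neg]
    gcongr
    refine norm_cpow_le_pow (norm_pos_iff.1 (hz.trans_le hzζ)) (by linarith) (by linarith) ?_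
    rw [← neg_add', norm_neg]
    exact (norm_add_le s 1).trans (by simpa using hs)
  have hmem (y : ℝ) (hy : |y| = x) :
      z + y * Complex.I ∈ {ζ : ℂ | z ≤ ζ.re} ∩ Metric.closedBall 0 (z + x) := by
    refine ⟨by simp, ?_⟩
    rw [mem_closedBall_zero_iff]
    refine (norm_add_le _ _).trans_eq ?_
    simp [abs_of_pos hz, hy]
  have hmvt := ((convex_halfSpace_re_ge z).inter (convex_closedBall 0 (z + x)))
    |>.norm_image_sub_le_of_norm_hasDerivWithin_le hderiv hbound (hmem x (abs_of_nonneg hx))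
      (hmem (-x) (by rw [abs_neg, abs_of_nonneg hx]))
  have hwidth : z + (-x : ℝ) * Complex.I - (z + x * Complex.I) = -(2 * x * Complex.I) := by
    push_cast
    ring
  rw [hwidth, Complex.ofReal_neg, neg_mul, ← sub_eq_add_neg] at hmvt
  rw [hermiteKernel, norm_div, div_le_iff₀ (by simp)]
  refine hmvt.trans_eq ?_
  simp [abs_of_nonneg hx]
  ring

lemma exists_norm_hermiteKernel_le (hz : 0 < z) (R : ℝ) :
    ∃ K, ∀ s : ℂ, ‖s‖ ≤ R → ∀ x : ℝ, 0 ≤ x → ‖hermiteKernel z s x‖ ≤ K * (x * Real.exp x) := by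
  obtain ⟨N, hN⟩ := exists_nat_ge (R + 1)
  refine ⟨R * (Real.exp π ^ N * (N.factorial * Real.exp (z + z⁻¹))), fun s hs x hx ↦ ?_⟩
  have hfactorial : (z + z⁻¹ + x) ^ N ≤ N.factorial * Real.exp (z + z⁻¹ + x) := by
    rw [mul_comm, ← div_le_iff₀ (by positivity)]
    exact Real.pow_div_factorial_le_exp _ (by positivity) N
  calc ‖hermiteKernel z s x‖ ≤ ‖s‖ * ((z + z⁻¹ + x) * Real.exp π) ^ N * x :=
        norm_hermiteKernel_le hz (by linarith) hx
    _ ≤ R * (N.factorial * Real.exp (z + z⁻¹ + x) * Real.exp π ^ N) * x := by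
        rw [mul_pow]
        gcongr
        exact (norm_nonneg s).trans hs
    _ = R * (Real.exp π ^ N * (N.factorial * Real.exp (z + z⁻¹))) * (x * Real.exp x) := by
        rw [Real.exp_add]
        ring

lemma differentiable_hermiteKernel (hz : 0 < z) (x : ℝ) :
    Differentiable ℂ (hermiteKernel z · x) := by
  have hadd := Complex.slitPlane_ne_zero (add_mul_I_mem_slitPlane hz x)
  have hsub := Complex.slitPlane_ne_zero (sub_mul_I_mem_slitPlane hz x)
  unfold hermiteKernel
  fun_prop (disch := simp [*])

lemma continuous_hermiteKernel (hz : 0 < z) (s : ℂ) : Continuous (hermiteKernel z s) := by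
  have hadd := Continuous.cpow (by fun_prop) continuous_const (add_mul_I_mem_slitPlane hz)
    (g := fun _ ↦ -s)
  have hsub := Continuous.cpow (by fun_prop) continuous_const (sub_mul_I_mem_slitPlane hz)
    (g := fun _ ↦ -s)
  exact (hsub.sub hadd).div_const _

lemma log_add_mul_I (hz : 0 < z) (x : ℝ) :
    Complex.log (z + x * Complex.I) =
      (Real.log (x ^ 2 + z ^ 2) / 2 : ℝ) + (Real.arctan (x / z) : ℝ) * Complex.I := by
  apply Complex.ext
  · rw [Complex.log_re, Complex.norm_add_mul_I, Real.log_sqrt (by positivity)]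
    simp [add_comm, -Complex.ofReal_arctan]
  · have harg : |Complex.arg (z + x * Complex.I)| < π / 2 :=
      Complex.abs_arg_lt_pi_div_two_iff.2 (Or.inl (by simpa using hz))
    rw [Complex.log_im, ← Real.arctan_tan (abs_lt.1 harg).1 (abs_lt.1 harg).2, Complex.tan_arg]
    simp [-Complex.ofReal_arctan]

lemma hasDerivAt_hermiteKernel_neg_one (hz : 0 < z) (x : ℝ) :
    HasDerivAt (hermiteKernel z · x)
      (z * Real.arctan (x / z) + x * Real.log (x ^ 2 + z ^ 2) / 2 : ℝ) (-1) := by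
  have hadd := (hasDerivAt_neg (-1 : ℂ)).const_cpow
    (Or.inl (Complex.slitPlane_ne_zero (add_mul_I_mem_slitPlane hz x)))
  have hsub := (hasDerivAt_neg (-1 : ℂ)).const_cpow
    (Or.inl (Complex.slitPlane_ne_zero (sub_mul_I_mem_slitPlane hz x)))
  refine ((hsub.sub hadd).div_const (2 * Complex.I)).congr_deriv ?_
  have hlog_sub := log_add_mul_I hz (-x)
  rw [Complex.ofReal_neg, neg_mul, ← sub_eq_add_neg, neg_sq, neg_div, Real.arctan_neg,
    Complex.ofReal_neg, neg_mul, ← sub_eq_add_neg] at hlog_sub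
  rw [neg_neg, Complex.cpow_one, Complex.cpow_one, log_add_mul_I hz, hlog_sub]
  push_cast
  field_simp
  ring_nf

end HermiteKernel

/-- Hermite's integral, as a function of complex `s`. -/
noncomputable def hermiteIntegral (z : ℝ) (s : ℂ) : ℂ :=
  ∫ x in Ioi (0 : ℝ), hermiteKernel z s x * hermiteWeight x

lemma integrableOn_mul_exp_mul_hermiteWeight :
    IntegrableOn (fun x ↦ x * Real.exp x * hermiteWeight x) (Ioi 0) := by
  have hexp : IntegrableOn (fun x : ℝ ↦ Real.exp (-((π - 1) * x))) (Ioi 0) := by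
    simpa only [neg_mul] using
      exp_neg_integrableOn_Ioi 0 (sub_pos.2 (one_lt_two.trans_le two_le_pi))
  refine hexp.mono' (by fun_prop)
    (ae_restrict_of_forall_mem measurableSet_Ioi fun x (hx : 0 < x) ↦ ?_)
  have hw := hermiteWeight_nonneg hx.le
  rw [Real.norm_of_nonneg (by positivity)]
  calc x * Real.exp x * hermiteWeight x = Real.exp x * (x * hermiteWeight x) := by ring
    _ ≤ Real.exp x * Real.exp (-(π * x)) := by
        gcongr
        exact mul_hermiteWeight_le hx
    _ = Real.exp (-((π - 1) * x)) := by
        rw [← Real.exp_add]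
        ring_nf

theorem hasDerivAt_hermiteIntegral {z : ℝ} (hz : 0 < z) (s : ℂ) :
    IntegrableOn (fun x ↦ deriv (hermiteKernel z · x) s * hermiteWeight x) (Ioi 0) ∧
      HasDerivAt (hermiteIntegral z)
        (∫ x in Ioi (0 : ℝ), deriv (hermiteKernel z · x) s * hermiteWeight x) s := by
  obtain ⟨K, hK⟩ := exists_norm_hermiteKernel_le hz (‖s‖ + 1)
  have hdiff (x : ℝ) : Differentiable ℂ fun w ↦ hermiteKernel z w x * hermiteWeight x :=
    (differentiable_hermiteKernel hz x).mul_const _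
  have h := hasDerivAt_integral_of_dominated_of_differentiableOn
    (μ := volume.restrict (Ioi 0)) (F := fun w x ↦ hermiteKernel z w x * hermiteWeight x)
    (bound := fun x ↦ K * (x * Real.exp x * hermiteWeight x)) (Metric.ball_mem_nhds s one_pos)
    (fun w _ ↦ (((continuous_hermiteKernel hz w).measurable.mul
      (by fun_prop)).aestronglyMeasurable))
    (ae_of_all _ fun x ↦ (hdiff x).differentiableOn)
    (ae_restrict_of_forall_mem measurableSet_Ioi fun x (hx : 0 < x) w hw ↦ ?_)
    (integrableOn_mul_exp_mul_hermiteWeight.const_mul K)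
  · simpa only [deriv_mul_const_field] using! h
  · have hw_norm : ‖w‖ ≤ ‖s‖ + 1 := by
      rw [← sub_le_iff_le_add']
      exact (norm_sub_norm_le w s).trans (mem_ball_iff_norm.1 hw).le
    rw [norm_mul, Complex.norm_real, Real.norm_of_nonneg (hermiteWeight_nonneg hx.le), ← mul_assoc]
    exact mul_le_mul_of_nonneg_right (hK w hw_norm x hx.le) (hermiteWeight_nonneg hx.le)

section Fubini

variable {z : ℝ}

lemma integrable_prod_mellin_sin_mul_hermiteWeight {s : ℂ} (hs : -1 < s.re) (hz : 0 < z) :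
    Integrable (Function.uncurry fun t x : ℝ ↦
      (t : ℂ) ^ (s - 1) * Complex.exp (-(z * t)) * (Real.sin (x * t) * hermiteWeight x : ℝ))
      ((volume.restrict (Ioi 0)).prod (volume.restrict (Ioi 0))) := by
  have hbound := (integrableOn_rpow_mul_exp_neg_mul hs hz).integrable.mul_prod
    integrableOn_mul_hermiteWeight.integrable
  refine hbound.mono' (by unfold Function.uncurry; fun_prop) ?_
  rw [Measure.prod_restrict]
  refine ae_restrict_of_forall_mem (measurableSet_Ioi.prod measurableSet_Ioi) ?_
  rintro ⟨t, x⟩ ⟨ht, hx⟩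
  have ht_pos : 0 < t := ht
  have hw := hermiteWeight_nonneg (le_of_lt hx)
  have hsin : |Real.sin (x * t)| ≤ x * t :=
    Real.abs_sin_le_abs.trans_eq (abs_of_pos (mul_pos hx ht))
  rw [Function.uncurry_apply_pair, norm_mul, norm_cpow_sub_one_mul_cexp_neg_mul s z ht,
    Complex.norm_real, norm_mul, Real.norm_eq_abs, Real.norm_of_nonneg hw, Complex.ofReal_re]
  calc t ^ (s.re - 1) * Real.exp (-(z * t)) * (|Real.sin (x * t)| * hermiteWeight x)
      ≤ t ^ (s.re - 1) * Real.exp (-(z * t)) * (x * t * hermiteWeight x) := by gcongr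
    _ = t ^ s.re * Real.exp (-(z * t)) * (x * hermiteWeight x) := by
        rw [Real.rpow_sub_one ht_pos.ne']
        field

theorem hasMellin_cexp_neg_mul_mul_integral_sin {s : ℂ} (hs : 0 < s.re) (hz : 0 < z) :
    HasMellin (fun t ↦ Complex.exp (-(z * t)) *
        (∫ x in Ioi (0 : ℝ), Real.sin (x * t) * hermiteWeight x : ℝ)) s
      (Complex.Gamma s * hermiteIntegral z s) := by
  have hprod := integrable_prod_mellin_sin_mul_hermiteWeight (by linarith : -1 < s.re) hz
  have hinner (t : ℝ) : (t : ℂ) ^ (s - 1) • (Complex.exp (-(z * t)) *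
        (∫ x in Ioi (0 : ℝ), Real.sin (x * t) * hermiteWeight x : ℝ)) =
      ∫ x in Ioi (0 : ℝ), (t : ℂ) ^ (s - 1) * Complex.exp (-(z * t)) *
        (Real.sin (x * t) * hermiteWeight x : ℝ) := by
    rw [integral_const_mul, integral_complex_ofReal, smul_eq_mul, mul_assoc]
  refine ⟨hprod.integral_prod_left.congr (ae_of_all _ fun t ↦ (hinner t).symm), ?_⟩
  simp_rw [mellin, hinner]
  rw [integral_integral_swap hprod, hermiteIntegral, ← integral_const_mul]
  congr 1 with x
  rw [← mul_assoc, ← (hasMellin_cexp_neg_mul_mul_sin hs hz x).2, mellin, ← integral_mul_const]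
  push_cast
  simp only [smul_eq_mul, mul_assoc]

theorem mellin_cexp_neg_mul_div_one_sub_cexp_neg {s : ℂ} (hs : 1 < s.re) (hz : 0 < z) :
    mellin (fun t ↦ Complex.exp (-(z * t)) / (1 - Complex.exp (-t))) s = Complex.Gamma s *
      ((z : ℂ) ^ (-s) / 2 + (z : ℂ) ^ (1 - s) / (s - 1) + 2 * hermiteIntegral z s) := by
  have hs_pos : 0 < s.re := one_pos.trans hs
  have hs_add : 0 < (s + -1).re := by simpa using hs
  have hs_sub : s - 1 ≠ 0 := sub_ne_zero.2 fun h ↦ by simp [h] at hs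
  have hz_re : 0 < (z : ℂ).re := by simpa using hz
  have hsplit : EqOn (fun t : ℝ ↦ Complex.exp (-(z * t)) / (1 - Complex.exp (-t)))
      (fun t : ℝ ↦ (2⁻¹ : ℂ) • Complex.exp (-(z * t)) +
        (t : ℂ) ^ (-1 : ℂ) • Complex.exp (-(z * t)) + (2 : ℂ) • (Complex.exp (-(z * t)) *
          (∫ x in Ioi (0 : ℝ), Real.sin (x * t) * hermiteWeight x : ℝ))) (Ioi 0) := by
    intro t (ht : 0 < t)
    dsimp only
    rw [integral_sin_mul_hermiteWeight ht.ne', Complex.cpow_neg_one]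
    push_cast
    simp only [smul_eq_mul]
    ring
  have hhalf := hasMellin_const_smul (hasMellin_cexp_neg_mul hs_pos hz_re).1 (2⁻¹ : ℂ)
  have hinv : MellinConvergent (fun t ↦ (t : ℂ) ^ (-1 : ℂ) • Complex.exp (-(z * t))) s :=
    MellinConvergent.cpow_smul.2 (hasMellin_cexp_neg_mul hs_add hz_re).1
  have hsin := hasMellin_const_smul (hasMellin_cexp_neg_mul_mul_integral_sin hs_pos hz).1 (2 : ℂ)
  have hGamma : Complex.Gamma s = (s - 1) * Complex.Gamma (s - 1) := by
    simpa using Complex.Gamma_add_one (s - 1) hs_sub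
  rw [mellin, setIntegral_congr_fun measurableSet_Ioi fun t ht ↦ congrArg _ (hsplit ht), ← mellin,
    (hasMellin_add (hasMellin_add hhalf.1 hinv).1 hsin.1).2, (hasMellin_add hhalf.1 hinv).2,
    hhalf.2, hsin.2, mellin_cpow_smul, (hasMellin_cexp_neg_mul hs_pos hz_re).2,
    (hasMellin_cexp_neg_mul hs_add hz_re).2, (hasMellin_cexp_neg_mul_mul_integral_sin hs_pos hz).2,
    ← sub_eq_add_neg, hGamma, neg_sub]
  simp only [smul_eq_mul]
  field

end Fubini

section HurwitzZetaReal

variable {z : ℝ}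

lemma hasSum_hurwitzZetaReal {s : ℂ} (hs : 1 < s.re) (hz : 0 < z) :
    HasSum (fun n : ℕ ↦ 1 / ((n + z : ℝ) : ℂ) ^ s) (hurwitzZetaReal s z) := by
  obtain ⟨N, hN⟩ := Nat.exists_eq_add_one.2 (Nat.ceil_pos.2 hz)
  have hz_le : z ≤ N + 1 := mod_cast hN ▸ Nat.le_ceil z
  have hz_gt : N < z := Nat.lt_ceil.1 (hN ▸ N.lt_succ_self)
  have hcoe : ((z - N : ℝ) : UnitAddCircle) = (z : UnitAddCircle) := by
    rw [AddCircle.coe_sub, sub_eq_self, AddCircle.coe_eq_zero_iff]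
    exact ⟨N, by simp⟩
  have hsum := HurwitzZeta.hasSum_hurwitzZeta_of_one_lt_re (a := z - N)
    ⟨by linarith, by linarith⟩ hs
  rw [hcoe] at hsum
  convert! (hasSum_nat_add_iff' N).2 hsum using 1
  · funext n
    push_cast
    ring_nf
  · rw [hurwitzZetaReal, hN, Nat.add_sub_cancel]
    congr 1
    refine Finset.sum_congr rfl fun k _ ↦ ?_
    rw [Complex.cpow_neg, one_div]
    push_cast
    ring_nf

lemma hasSum_cexp_neg_mul_div_one_sub_cexp_neg (z : ℂ) {t : ℝ} (ht : 0 < t) :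
    HasSum (fun n : ℕ ↦ Complex.exp (-((n + z) * t)))
      (Complex.exp (-(z * t)) / (1 - Complex.exp (-t))) := by
  have hlt : ‖Complex.exp (-t)‖ < 1 := by
    rw [Complex.norm_exp]
    simpa using ht
  rw [div_eq_mul_inv]
  convert! (hasSum_geometric_of_norm_lt_one hlt).mul_left (Complex.exp (-(z * t))) using 2 with n
  rw [← Complex.exp_nat_mul, ← Complex.exp_add]
  ring_nf

theorem Gamma_mul_hurwitzZetaReal {s : ℂ} (hs : 1 < s.re) (hz : 0 < z) :
    Complex.Gamma s * hurwitzZetaReal s z =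
      mellin (fun t ↦ Complex.exp (-(z * t)) / (1 - Complex.exp (-t))) s := by
  have hsum := hasSum_hurwitzZetaReal hs hz
  have hpos (n : ℕ) : 0 < (n : ℝ) + z := by positivity
  have hmellin := hasSum_mellin (a := fun _ : ℕ ↦ (1 : ℂ)) (p := fun n ↦ (n : ℝ) + z)
    (F := fun t ↦ Complex.exp (-(z * t)) / (1 - Complex.exp (-t))) (s := s)
    (fun n ↦ Or.inr (hpos n)) (one_pos.trans hs) (fun t ht ↦ ?_) (hsum.summable.norm.congr ?_)
  · refine (hsum.mul_left (Complex.Gamma s)).unique ?_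
    simpa only [mul_one, mul_one_div] using hmellin
  · simpa [neg_mul, -neg_add_rev] using hasSum_cexp_neg_mul_div_one_sub_cexp_neg z ht
  · intro n
    rw [norm_div, Complex.norm_cpow_eq_rpow_re_of_pos (hpos n)]

lemma differentiableAt_hurwitzZetaReal {s : ℂ} (hs : s ≠ 1) (hz : 0 < z) :
    DifferentiableAt ℂ (hurwitzZetaReal · z) s := by
  refine (HurwitzZeta.differentiableAt_hurwitzZeta _ hs).sub
    (DifferentiableAt.fun_sum fun k _ ↦ .const_cpow (by fun_prop) (Or.inl ?_))
  have hceil := Nat.ceil_lt_add_one hz.le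
  have hpos : 0 < z - (⌈z⌉₊ - 1) + k := by linarith [k.cast_nonneg (α := ℝ)]
  exact Complex.ofReal_ne_zero.2 hpos.ne'

lemma differentiableAt_cpow_add_hermiteIntegral {s : ℂ} (hs : s ≠ 1) (hz : 0 < z) :
    DifferentiableAt ℂ (fun s : ℂ ↦ (z : ℂ) ^ (-s) / 2 + (z : ℂ) ^ (1 - s) / (s - 1) +
      2 * hermiteIntegral z s) s := by
  have hz_ne : (z : ℂ) ≠ 0 := Complex.ofReal_ne_zero.2 hz.ne'
  have hs_sub : s - 1 ≠ 0 := sub_ne_zero.2 hs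
  have hint := (hasDerivAt_hermiteIntegral hz s).2.differentiableAt
  fun_prop (disch := simp [*])

theorem hurwitzZetaReal_eq_cpow_add_hermiteIntegral {s : ℂ} (hs : s ≠ 1) (hz : 0 < z) :
    hurwitzZetaReal s z = (z : ℂ) ^ (-s) / 2 + (z : ℂ) ^ (1 - s) / (s - 1) +
      2 * hermiteIntegral z s := by
  have hleft : AnalyticOnNhd ℂ (hurwitzZetaReal · z) {1}ᶜ := DifferentiableOn.analyticOnNhd
    (fun w hw ↦ (differentiableAt_hurwitzZetaReal hw hz).differentiableWithinAt)
    isOpen_compl_singleton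
  have hright := DifferentiableOn.analyticOnNhd
    (fun w hw ↦ (differentiableAt_cpow_add_hermiteIntegral hw hz).differentiableWithinAt)
    isOpen_compl_singleton
  have hhalfPlane : {w : ℂ | 1 < w.re} ∈ 𝓝 (2 : ℂ) :=
    (isOpen_lt continuous_const Complex.continuous_re).mem_nhds (by simp)
  refine hleft.eqOn_of_preconnected_of_eventuallyEq hright
    (isConnected_compl_singleton_of_one_lt_rank (by simp) 1).isPreconnected (z₀ := 2) (by simp)
    (eventually_of_mem hhalfPlane fun w (hw : 1 < w.re) ↦ ?_) hs
  refine mul_left_cancel₀ (Complex.Gamma_ne_zero_of_re_pos (one_pos.trans hw)) ?_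
  rw [Gamma_mul_hurwitzZetaReal hw hz, mellin_cexp_neg_mul_div_one_sub_cexp_neg hw hz]

end HurwitzZetaReal

section DerivNegOne

variable {z : ℝ}

lemma hasDerivAt_cpow_div_two_add_cpow_div_neg_one (hz : 0 < z) :
    HasDerivAt (fun s : ℂ ↦ (z : ℂ) ^ (-s) / 2 + (z : ℂ) ^ (1 - s) / (s - 1))
      (z ^ 2 / 2 * Real.log z - z ^ 2 / 4 - z / 2 * Real.log z : ℝ) (-1) := by
  have hz_ne : (z : ℂ) ≠ 0 := Complex.ofReal_ne_zero.2 hz.ne'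
  have hneg := (hasDerivAt_neg (-1 : ℂ)).const_cpow (c := z) (Or.inl hz_ne)
  have hsub := ((hasDerivAt_id (-1 : ℂ)).const_sub 1).const_cpow (c := z) (Or.inl hz_ne)
  have hden := (hasDerivAt_id (-1 : ℂ)).sub_const 1
  refine ((hneg.div_const 2).add (hsub.div hden (by norm_num))).congr_deriv ?_
  have hsq : (z : ℂ) ^ (1 - -1 : ℂ) = z ^ 2 := by
    rw [sub_neg_eq_add, one_add_one_eq_two, Complex.cpow_ofNat]
  simp only [id_eq, neg_neg, Complex.cpow_one, hsq]
  push_cast [Complex.ofReal_log hz.le]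
  ring

lemma arctan_le_self {x : ℝ} (hx : 0 ≤ x) : Real.arctan x ≤ x := by
  simpa only [Real.tan_arctan] using
    Real.le_tan (Real.arctan_nonneg.2 hx) (Real.arctan_lt_pi_div_two x)

lemma integrableOn_arctan_div_mul_hermiteWeight (hz : 0 < z) :
    IntegrableOn (fun x ↦ Real.arctan (x / z) * hermiteWeight x) (Ioi 0) := by
  refine (integrableOn_mul_hermiteWeight.const_mul z⁻¹).mono' (by fun_prop)
    (ae_restrict_of_forall_mem measurableSet_Ioi fun x (hx : 0 < x) ↦ ?_)
  have hw := hermiteWeight_nonneg hx.le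
  have harctan : Real.arctan (x / z) ≤ z⁻¹ * x := by
    rw [inv_mul_eq_div]
    exact arctan_le_self (by positivity)
  rw [norm_mul, Real.norm_of_nonneg hw, Real.norm_of_nonneg (Real.arctan_nonneg.2 (by positivity)),
    ← mul_assoc]
  gcongr

theorem hasDerivAt_hermiteIntegral_neg_one (hz : 0 < z) :
    HasDerivAt (hermiteIntegral z)
      (z * (∫ x in Ioi (0 : ℝ), Real.arctan (x / z) * hermiteWeight x) +
        (∫ x in Ioi (0 : ℝ), x * Real.log (x ^ 2 + z ^ 2) * hermiteWeight x) / 2 : ℝ) (-1) := by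
  obtain ⟨hint, hderiv⟩ := hasDerivAt_hermiteIntegral hz (-1)
  simp_rw [(hasDerivAt_hermiteKernel_neg_one hz _).deriv, ← Complex.ofReal_mul] at hint hderiv
  have harctan := (integrableOn_arctan_div_mul_hermiteWeight hz).const_mul z
  have hlog : IntegrableOn (fun x ↦ x * Real.log (x ^ 2 + z ^ 2) * hermiteWeight x / 2)
      (Ioi 0) := by
    refine (hint.re.sub harctan).congr (ae_of_all _ fun x ↦ ?_)
    simp only [Pi.sub_apply, RCLike.re_to_complex, Complex.ofReal_re]
    ring
  convert! hderiv using 1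
  rw [integral_complex_ofReal, ← integral_const_mul, ← integral_div, ← integral_add harctan hlog]
  congr 2 with x
  ring

end DerivNegOne

/-- Hermite-type integral representation of ζ'(-1, z) for z > 0. -/
theorem hurwitzZetaDerivNegOne_eq_hermite_integral (z : ℝ) (hz : 0 < z) :
    hurwitzZetaDerivNegOne z =
      ((z ^ 2 / 2 * Real.log z - z ^ 2 / 4 - z / 2 * Real.log z
        + 2 * z * (∫ x in Set.Ioi (0 : ℝ), Real.arctan (x / z) / (Real.exp (2 * π * x) - 1))
        + (∫ x in Set.Ioi (0 : ℝ),
            x * Real.log (x ^ 2 + z ^ 2) / (Real.exp (2 * π * x) - 1)) : ℝ) : ℂ) := by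
  have hhermite : (hurwitzZetaReal · z) =ᶠ[𝓝 (-1)] fun s ↦
      (z : ℂ) ^ (-s) / 2 + (z : ℂ) ^ (1 - s) / (s - 1) + 2 * hermiteIntegral z s := by
    filter_upwards [isOpen_ne.mem_nhds (by norm_num : (-1 : ℂ) ≠ 1)] with s hs
    exact hurwitzZetaReal_eq_cpow_add_hermiteIntegral hs hz
  have hderiv := (hasDerivAt_cpow_div_two_add_cpow_div_neg_one hz).add
    ((hasDerivAt_hermiteIntegral_neg_one hz).const_mul 2)
  simp_rw [hermiteWeight, ← div_eq_mul_inv] at hderiv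
  rw [hurwitzZetaDerivNegOne, (hderiv.congr_of_eventuallyEq hhermite).deriv]
  push_cast
  ring
end

section
/- The Barnes G-function satisfies log G(1/2) = 1/8 + (log 2)/24 − (log π)/4 − (3/2)·log A. -/
open Real MeasureTheory Filter

/-!
The Hurwitz zeta values `ζ(s, j/N)` with `j` prime to `N` sum to `N ^ s` times the L-function of the
trivial character mod `N`, that is, to the Riemann zeta function with the Euler factors at `p ∣ N`
removed. For `N = 2` this reads `ζ(s, 1/2) = (2 ^ s - 1) ζ(s)`. Differentiating at `s = -1`, where
`ζ(-1) = -1/12`, expresses `ζ'(-1, 1/2)` through `log 2` and `ζ'(-1)`, hence through `log 2` and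
`log A`; the term `log π` comes from `Γ(1/2) = √π`.
-/

theorem sum_isUnit_hurwitzZeta_toAddCircle (N : ℕ) [NeZero N] {s : ℂ} (hs : s ≠ 1) :
    ∑ j : ZMod N with IsUnit j, HurwitzZeta.hurwitzZeta (ZMod.toAddCircle j) s =
      N ^ s * (∏ p ∈ N.primeFactors, (1 - (p : ℂ) ^ (-s))) * riemannZeta s := by
  have hN : (N : ℂ) ^ s ≠ 0 := by simp [Complex.cpow_eq_zero_iff, NeZero.ne N]
  have htriv (j : ZMod N) : (1 : DirichletCharacter ℂ N) j = if IsUnit j then 1 else 0 := by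
    split_ifs with hj
    · exact MulChar.one_apply hj
    · exact MulChar.map_nonunit _ hj
  have hL : (N : ℂ) ^ (-s) *
      ∑ j : ZMod N with IsUnit j, HurwitzZeta.hurwitzZeta (ZMod.toAddCircle j) s =
        DirichletCharacter.LFunctionTrivChar N s := by
    simp only [DirichletCharacter.LFunction, ZMod.LFunction, htriv, ite_mul, one_mul,
      zero_mul, Finset.sum_filter]
  rw [mul_assoc, ← DirichletCharacter.LFunctionTrivChar_eq_mul_riemannZeta hs, ← hL,
    Complex.cpow_neg, mul_inv_cancel_left₀ hN]

theorem hurwitzZeta_one_half {s : ℂ} (hs : s ≠ 1) :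
    HurwitzZeta.hurwitzZeta ((1 / 2 : ℝ) : UnitAddCircle) s = (2 ^ s - 1) * riemannZeta s := by
  have hunits : ({j : ZMod 2 | IsUnit j} : Finset (ZMod 2)) = {1} := by decide
  have hcircle : ZMod.toAddCircle (1 : ZMod 2) = ((1 / 2 : ℝ) : UnitAddCircle) := by
    simpa using ZMod.toAddCircle_natCast (N := 2) 1
  have h2 : (2 : ℂ) ^ s ≠ 0 := by simp [Complex.cpow_eq_zero_iff]
  have h := sum_isUnit_hurwitzZeta_toAddCircle 2 hs
  rw [hunits, Finset.sum_singleton, hcircle, Nat.prime_two.primeFactors, Finset.prod_singleton,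
    Nat.cast_two, mul_one_sub, Complex.cpow_neg, mul_inv_cancel₀ h2] at h
  exact h

theorem hasDerivAt_hurwitzZeta_one_half {s : ℂ} (hs : s ≠ 1) :
    HasDerivAt (HurwitzZeta.hurwitzZeta ((1 / 2 : ℝ) : UnitAddCircle))
      (2 ^ s * Real.log 2 * riemannZeta s + (2 ^ s - 1) * deriv riemannZeta s) s := by
  have hpow : HasDerivAt (fun z : ℂ ↦ (2 : ℂ) ^ z - 1) (2 ^ s * Real.log 2) s := by
    simpa using ((hasDerivAt_id s).const_cpow (c := 2) (.inl two_ne_zero)).sub_const 1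
  refine (hpow.mul (differentiableAt_riemannZeta hs).hasDerivAt).congr_of_eventuallyEq ?_
  filter_upwards [isOpen_ne.mem_nhds hs] with z hz using hurwitzZeta_one_half hz

theorem riemannZeta_neg_one : riemannZeta (-1) = -1 / 12 := by
  rw [← Nat.cast_one (R := ℂ), riemannZeta_neg_nat_eq_bernoulli, one_add_one_eq_two, bernoulli_two]
  norm_num

theorem hurwitzZetaReal_of_le_one {a : ℝ} (ha : a ≤ 1) (s : ℂ) :
    hurwitzZetaReal s a = HurwitzZeta.hurwitzZeta (a : UnitAddCircle) s := by
  have hceil : ⌈a⌉₊ - 1 = 0 := Nat.sub_eq_zero_of_le (Nat.ceil_le.mpr (by exact_mod_cast ha))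
  rw [hurwitzZetaReal, hceil, Finset.range_zero, Finset.sum_empty, sub_zero]

theorem hurwitzZetaDerivNegOne_one_half :
    hurwitzZetaDerivNegOne (1 / 2) = -Real.log 2 / 24 - deriv riemannZeta (-1) / 2 := by
  have hfun : (hurwitzZetaReal · (1 / 2)) =
      HurwitzZeta.hurwitzZeta ((1 / 2 : ℝ) : UnitAddCircle) :=
    funext (hurwitzZetaReal_of_le_one (by norm_num))
  rw [hurwitzZetaDerivNegOne, hfun, (hasDerivAt_hurwitzZeta_one_half (by norm_num)).deriv,
    riemannZeta_neg_one, Complex.cpow_neg_one]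
  ring

theorem log_Gamma_one_half : Real.log (Real.Gamma (1 / 2)) = Real.log π / 2 := by
  rw [Real.Gamma_one_half_eq, Real.log_sqrt Real.pi_pos.le]

/-- log G(1/2) = 1/8 + (log 2)/24 − (log π)/4 − (3/2) log A. -/
theorem logBarnesG_one_half :
    logBarnesG (1 / 2) =
      1 / 8 + (Real.log 2) / 24 - (Real.log π) / 4 - (3 / 2) * logA := by
  rw [logBarnesG, if_pos (by norm_num), logBarnesG1p, hurwitzZetaDerivNegOne_one_half, logA,
    log_Gamma_one_half]
  push_cast
  ring
end

section
/- The Barnes G-function satisfies log G(1/4) = 3/32 − K/(4π) − (3/4)·log Γ(1/4) − (9/8)·log A, where K is Catalan's constant. -/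
open Real MeasureTheory Filter

/-!
Split `ζ(s, x)` into its even and odd parts in `x`. The functional equation of the odd part carries
the factor `sin (π s / 2)`, which vanishes at the reflected point, so differentiating it at `s = -1`
only leaves the Clausen value `Cl₂(2πx) / (4π)`. At `x = 1/4` this is `K / (4π)`, while the even
part is half of `ζ(s, 1/4) + ζ(s, 3/4)`, the sum over the residues prime to `4`, hence an elementary
multiple of `ζ(s)`.
-/

section

open HurwitzZeta
open scoped Nat

theorem sum_units_hurwitzZeta (N : ℕ) [NeZero N] {s : ℂ} (hs : s ≠ 1) :
    ∑ u : (ZMod N)ˣ, hurwitzZeta (ZMod.toAddCircle (u : ZMod N)) s =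
      (N : ℂ) ^ s * (∏ p ∈ N.primeFactors, (1 - (p : ℂ) ^ (-s))) * riemannZeta s := by
  have hL := DirichletCharacter.LFunctionTrivChar_eq_mul_riemannZeta (N := N) hs
  have hsum : ∑ j : ZMod N, (1 : DirichletCharacter ℂ N) j * hurwitzZeta (ZMod.toAddCircle j) s =
      ∑ u : (ZMod N)ˣ, hurwitzZeta (ZMod.toAddCircle (u : ZMod N)) s := by
    refine (Fintype.sum_of_injective _ Units.val_injective _ _ (fun j hj ↦ ?_) fun u ↦ ?_).symm
    · rw [MulChar.map_nonunit _ fun h ↦ hj h, zero_mul]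
    · rw [MulChar.one_apply_coe, one_mul]
  rw [DirichletCharacter.LFunctionTrivChar, DirichletCharacter.LFunction, ZMod.LFunction,
    hsum] at hL
  rw [mul_assoc, ← hL, ← mul_assoc, ← Complex.cpow_add _ _ (NeZero.ne _), add_neg_cancel,
    Complex.cpow_zero, one_mul]

theorem hurwitzZetaEven_one_quarter {s : ℂ} (hs : s ≠ 1) :
    hurwitzZetaEven ((1 / 4 : ℝ) : UnitAddCircle) s = (4 ^ s - 2 ^ s) / 2 * riemannZeta s := by
  have hunits : (Finset.univ : Finset (ZMod 4)ˣ) = {1, -1} := by decide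
  have hcircle : ZMod.toAddCircle (1 : ZMod 4) = ((1 / 4 : ℝ) : UnitAddCircle) := by
    simpa using ZMod.toAddCircle_natCast (N := 4) 1
  have hprimes : (4 : ℕ).primeFactors = {2} :=
    Nat.primeFactors_prime_pow (k := 2) two_ne_zero Nat.prime_two
  have hsum := sum_units_hurwitzZeta 4 hs
  rw [hunits, Finset.sum_pair (by decide), hprimes, Finset.prod_singleton, Units.val_neg,
    Units.val_one, map_neg, hcircle] at hsum
  have hpow : (4 : ℂ) ^ s * 2 ^ (-s) = 2 ^ s := by
    rw [show (4 : ℂ) = (2 : ℕ) * (2 : ℕ) by norm_num, Complex.natCast_mul_natCast_cpow,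
      Nat.cast_ofNat, mul_assoc, ← Complex.cpow_add _ _ two_ne_zero, add_neg_cancel,
      Complex.cpow_zero, mul_one]
  rw [hurwitzZetaEven_eq, hsum, ← hpow]
  push_cast
  ring

theorem hasDerivAt_hurwitzZetaEven_one_quarter :
    HasDerivAt (hurwitzZetaEven ((1 / 4 : ℝ) : UnitAddCircle)) (-deriv riemannZeta (-1) / 8)
      (-1) := by
  have hlog : Complex.log 4 = 2 * Complex.log 2 := by
    have hreal : Real.log 4 = 2 * Real.log 2 := by
      rw [show (4 : ℝ) = 2 ^ 2 by norm_num, Real.log_pow, Nat.cast_ofNat]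
    rw [← Complex.ofNat_log, ← Complex.ofNat_log, hreal, Complex.ofReal_mul, Complex.ofReal_ofNat]
  -- `(4 ^ s - 2 ^ s) / 2` is stationary at `s = -1`, so no `log 2` survives.
  have hfactor : HasDerivAt (fun s : ℂ ↦ ((4 : ℂ) ^ s - 2 ^ s) / 2) 0 (-1) := by
    have hpow (b : ℂ) (hb : b ≠ 0) :
        HasDerivAt (fun s : ℂ ↦ b ^ s) (b⁻¹ * Complex.log b) (-1) := by
      simpa [Complex.cpow_neg_one] using (hasDerivAt_id (-1 : ℂ)).const_cpow (Or.inl hb)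
    refine (((hpow 4 (by norm_num)).sub (hpow 2 two_ne_zero)).div_const 2).congr_deriv ?_
    rw [hlog]
    ring
  have hzeta : HasDerivAt riemannZeta (deriv riemannZeta (-1)) (-1) :=
    (differentiableAt_riemannZeta (by norm_num)).hasDerivAt
  have heven : hurwitzZetaEven ((1 / 4 : ℝ) : UnitAddCircle) =ᶠ[nhds (-1)]
      fun s ↦ (4 ^ s - 2 ^ s) / 2 * riemannZeta s := by
    filter_upwards [isOpen_ne.mem_nhds (show (-1 : ℂ) ≠ 1 by norm_num)] with s hs
    exact hurwitzZetaEven_one_quarter hs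
  refine ((hfactor.mul hzeta).congr_of_eventuallyEq heven).congr_deriv ?_
  rw [Complex.cpow_neg_one, Complex.cpow_neg_one]
  ring

theorem hasDerivAt_sin_pi_mul_div_two (k : ℕ) :
    HasDerivAt (fun s : ℂ ↦ Complex.sin (π * s / 2)) ((-1) ^ k * (π / 2)) (2 * k) := by
  have hlin : HasDerivAt (fun s : ℂ ↦ π * s / 2) ((π : ℂ) / 2) (2 * k) := by
    simpa using ((hasDerivAt_id (2 * k : ℂ)).const_mul (π : ℂ)).div_const 2
  refine hlin.csin.congr_deriv ?_
  rw [show (π : ℂ) * (2 * k) / 2 = k * π by ring, ← Complex.ofReal_natCast,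
    ← Complex.ofReal_mul, ← Complex.ofReal_cos, Real.cos_nat_mul_pi]
  push_cast
  rfl

theorem hasDerivAt_hurwitzZetaOdd_one_sub (a : UnitAddCircle) {k : ℕ} (hk : 0 < k) :
    HasDerivAt (fun s ↦ hurwitzZetaOdd a (1 - s))
      (2 * (2 * π : ℂ) ^ (-(2 * k) : ℂ) * Complex.Gamma (2 * k) * sinZeta a (2 * k) *
        ((-1) ^ k * (π / 2)))
      (2 * k) := by
  have hpi : (2 * π : ℂ) ≠ 0 := mul_ne_zero two_ne_zero (Complex.ofReal_ne_zero.mpr pi_ne_zero)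
  have hpoles {s : ℂ} (hs : 0 < s.re) (n : ℕ) : s ≠ -n := by
    rintro rfl
    exact absurd hs (by simp)
  have hre : 0 < (2 * k : ℂ).re := by
    norm_cast
    omega
  have hdiff : DifferentiableAt ℂ
      (fun s ↦ 2 * (2 * π : ℂ) ^ (-s) * Complex.Gamma s * sinZeta a s) (2 * k) :=
    (((differentiableAt_id.neg.const_cpow (Or.inl hpi)).const_mul 2).mul
      (Complex.differentiableAt_Gamma _ (hpoles hre))).mul (differentiableAt_sinZeta a _)
  have hsin_zero : Complex.sin (π * (2 * k) / 2) = 0 := by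
    rw [show (π : ℂ) * (2 * k) / 2 = k * π by ring, Complex.sin_nat_mul_pi]
  have hreflect : (fun s ↦ hurwitzZetaOdd a (1 - s)) =ᶠ[nhds (2 * k : ℂ)]
      fun s ↦ 2 * (2 * π) ^ (-s) * Complex.Gamma s * sinZeta a s * Complex.sin (π * s / 2) := by
    filter_upwards [(isOpen_lt continuous_const Complex.continuous_re).mem_nhds hre] with s hs
    rw [hurwitzZetaOdd_one_sub a (hpoles hs), mul_right_comm]
  refine ((hdiff.hasDerivAt.mul (hasDerivAt_sin_pi_mul_div_two k)).congr_of_eventuallyEq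
    hreflect).congr_deriv ?_
  rw [hsin_zero, mul_zero, zero_add]

theorem hasDerivAt_hurwitzZetaOdd_neg_odd (a : UnitAddCircle) (k : ℕ) :
    HasDerivAt (hurwitzZetaOdd a)
      ((-1) ^ k * π * (2 * k + 1)! / (2 * π) ^ (2 * k + 2) * sinZeta a (2 * k + 2))
      (-(2 * k + 1)) := by
  have hcast : (2 * (k + 1 : ℕ) : ℂ) = 2 * k + 2 := by
    push_cast
    ring
  have hpow : (2 * π : ℂ) ^ (-(2 * k + 2) : ℂ) = ((2 * π : ℂ) ^ (2 * k + 2))⁻¹ := by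
    rw [Complex.cpow_neg]
    exact_mod_cast congrArg (·⁻¹) (Complex.cpow_natCast (2 * π) (2 * k + 2))
  have hGamma : Complex.Gamma (2 * k + 2) = (2 * k + 1)! := by
    rw [← Complex.Gamma_nat_eq_factorial]
    push_cast
    ring_nf
  have hreflected := hasDerivAt_hurwitzZetaOdd_one_sub a k.succ_pos
  rw [hcast, hpow, hGamma, show (2 * k + 2 : ℂ) = 1 - -(2 * k + 1) by ring] at hreflected
  have hodd := hreflected.comp_const_sub 1 (-(2 * k + 1) : ℂ)
  simp only [sub_sub_cancel] at hodd
  refine hodd.congr_deriv ?_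
  rw [show (1 - -(2 * k + 1) : ℂ) = 2 * k + 2 by ring, pow_succ (-1 : ℂ) k]
  field_simp

theorem sinZeta_two_eq_clausen2 (x : ℝ) :
    sinZeta (x : UnitAddCircle) 2 = clausen2 (2 * π * x) := by
  have hsum := (hasSum_nat_add_iff' 1).mpr (hasSum_nat_sinZeta x (s := 2) (by norm_num))
  rw [Finset.sum_range_one, Nat.cast_zero, mul_zero, Real.sin_zero, Complex.ofReal_zero, zero_div,
    sub_zero] at hsum
  rw [← hsum.tsum_eq, clausen2, Complex.ofReal_tsum]
  refine tsum_congr fun n ↦ ?_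
  rw [Complex.cpow_ofNat]
  push_cast
  ring_nf

theorem hasDerivAt_hurwitzZetaOdd_neg_one (x : ℝ) :
    HasDerivAt (hurwitzZetaOdd (x : UnitAddCircle)) (clausen2 (2 * π * x) / (4 * π)) (-1) := by
  have hderiv := hasDerivAt_hurwitzZetaOdd_neg_odd (x : UnitAddCircle) 0
  have hpi : (π : ℂ) ≠ 0 := Complex.ofReal_ne_zero.mpr pi_ne_zero
  simp only [Nat.cast_zero, mul_zero, zero_add, pow_zero, one_mul, Nat.factorial_one,
    Nat.cast_one, mul_one, sinZeta_two_eq_clausen2] at hderiv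
  refine hderiv.congr_deriv ?_
  field_simp
  ring

theorem hurwitzZetaReal_of_le_one_s4 (s : ℂ) {x : ℝ} (hx : x ≤ 1) :
    hurwitzZetaReal s x = hurwitzZeta (x : UnitAddCircle) s := by
  have hceil : ⌈x⌉₊ - 1 = 0 := Nat.sub_eq_zero_of_le (Nat.ceil_le.mpr (by simpa using hx))
  rw [hurwitzZetaReal, hceil, Finset.range_zero, Finset.sum_empty, sub_zero]

theorem hurwitzZetaDerivNegOne_of_le_one {x : ℝ} (hx : x ≤ 1) :
    hurwitzZetaDerivNegOne x =
      deriv (hurwitzZetaEven (x : UnitAddCircle)) (-1) + clausen2 (2 * π * x) / (4 * π) := by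
  have heven := (differentiableAt_hurwitzZetaEven (x : UnitAddCircle)
    (show (-1 : ℂ) ≠ 1 by norm_num)).hasDerivAt
  simp only [hurwitzZetaDerivNegOne, hurwitzZetaReal_of_le_one_s4 _ hx]
  exact (heven.add (hasDerivAt_hurwitzZetaOdd_neg_one x)).deriv

end

theorem clausen2_pi_div_two : clausen2 (π / 2) = catalanConst := by
  have hodd (k : ℕ) : Real.sin (((2 * k + 1 : ℕ) + 1) * (π / 2)) = 0 := by
    rw [← Real.sin_nat_mul_pi (k + 1)]
    push_cast
    ring_nf
  have heven (k : ℕ) : Real.sin (((2 * k : ℕ) + 1) * (π / 2)) = (-1) ^ k := by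
    rw [show ((2 * k : ℕ) + 1) * (π / 2) = π / 2 + k * π by push_cast; ring,
      Real.sin_add_nat_mul_pi, Real.sin_pi_div_two, mul_one]
  have hsupport : Function.support (fun n : ℕ ↦ Real.sin ((n + 1) * (π / 2)) / ((n : ℝ) + 1) ^ 2) ⊆
      Set.range (2 * · : ℕ → ℕ) := by
    intro n hn
    obtain ⟨k, rfl | rfl⟩ := n.even_or_odd'
    · exact ⟨k, rfl⟩
    · exact absurd (by simp only [hodd, zero_div]) hn
  rw [clausen2, catalanConst, ← (mul_right_injective₀ two_ne_zero).tsum_eq hsupport]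
  refine tsum_congr fun k ↦ ?_
  rw [heven]
  push_cast
  rfl

theorem logBarnesG_of_le_one {x : ℝ} (hx : x ≤ 1) :
    logBarnesG x = (x - 1) * Real.log (Real.Gamma x) + deriv riemannZeta (-1)
      - deriv (HurwitzZeta.hurwitzZetaEven (x : UnitAddCircle)) (-1)
      - clausen2 (2 * π * x) / (4 * π) := by
  rw [logBarnesG, if_pos hx, logBarnesG1p, hurwitzZetaDerivNegOne_of_le_one hx]
  ring

/-- log G(1/4) = 3/32 − K/(4π) − (3/4) log Γ(1/4) − (9/8) log A. -/
theorem logBarnesG_one_quarter :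
    logBarnesG (1 / 4) =
      3 / 32 - catalanConst / (4 * π) - (3 / 4) * Real.log (Real.Gamma (1 / 4))
        - (9 / 8) * logA := by
  rw [logBarnesG_of_le_one (by norm_num), hasDerivAt_hurwitzZetaEven_one_quarter.deriv,
    show 2 * π * (1 / 4) = π / 2 by ring, clausen2_pi_div_two, logA]
  push_cast
  ring
end
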